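/- arXiv:1404.0999 — 2 statements merged into one kernel-verified Lean document; each statement's English description precedes it below -/
import Mathlib

section
/- Let (Ω, A, P) be a probability space, X, Y : Ω → ℝ^d integrable random vectors, and Z : Ω → S a random element in a measurable space S. Then X | Z ≤icx Y | Z if and only if X and Y admit a Z-conditional coupling (X̂, Ŷ, Ẑ) such that X̂ ≤ E(Ŷ | σ(X̂, Ẑ)) coordinatewise almost surely. -/
open MeasureTheory ProbabilityTheory Filter

noncomputable section

abbrev Euc (d : ℕ) : Type := EuclideanSpace ℝ (Fin d)

def FiniteFirstMoment {d : ℕ} (μ : Measure (Euc d)) : Prop :=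
  Integrable (fun x => x) μ

def ConvexOrder {d : ℕ} (μ ν : Measure (Euc d)) : Prop :=
  ∀ φ : Euc d → ℝ, ConvexOn ℝ Set.univ φ → Integrable φ μ → Integrable φ ν →
    ∫ x, φ x ∂μ ≤ ∫ x, φ x ∂ν

def CoordMono {d : ℕ} (φ : Euc d → ℝ) : Prop :=
  ∀ x y : Euc d, (∀ i, x i ≤ y i) → φ x ≤ φ y

def IncConvexOrder {d : ℕ} (μ ν : Measure (Euc d)) : Prop :=
  ∀ φ : Euc d → ℝ, ConvexOn ℝ Set.univ φ → CoordMono φ → Integrable φ μ → Integrable φ ν →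
    ∫ x, φ x ∂μ ≤ ∫ x, φ x ∂ν

def IsCoupling {d : ℕ} (lam : Measure (Euc d × Euc d)) (μ ν : Measure (Euc d)) : Prop :=
  lam.map Prod.fst = μ ∧ lam.map Prod.snd = ν

def fstSigma (d : ℕ) : MeasurableSpace (Euc d × Euc d) :=
  MeasurableSpace.comap Prod.fst inferInstance

def IsMartingaleCoupling {d : ℕ} (lam : Measure (Euc d × Euc d)) : Prop :=
  lam[(fun p : Euc d × Euc d => p.2) | fstSigma d] =ᵐ[lam] (fun p => p.1)

def IsSubmartingaleCoupling {d : ℕ} (lam : Measure (Euc d × Euc d)) : Prop :=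
  ∀ᵐ p ∂lam, ∀ i, p.1 i ≤ (lam[(fun q : Euc d × Euc d => q.2) | fstSigma d]) p i
def CondCXLe {d : ℕ} {Ω : Type} {mΩ : MeasurableSpace Ω} (P : Measure Ω)
    (m : MeasurableSpace Ω) (X Y : Ω → Euc d) : Prop :=
  ∀ φ : Euc d → ℝ, ConvexOn ℝ Set.univ φ →
    Integrable (fun ω => φ (X ω)) P → Integrable (fun ω => φ (Y ω)) P →
    P[(fun ω => φ (X ω)) | m] ≤ᵐ[P] P[(fun ω => φ (Y ω)) | m]

def CondICXLe {d : ℕ} {Ω : Type} {mΩ : MeasurableSpace Ω} (P : Measure Ω)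
    (m : MeasurableSpace Ω) (X Y : Ω → Euc d) : Prop :=
  ∀ φ : Euc d → ℝ, ConvexOn ℝ Set.univ φ → CoordMono φ →
    Integrable (fun ω => φ (X ω)) P → Integrable (fun ω => φ (Y ω)) P →
    P[(fun ω => φ (X ω)) | m] ≤ᵐ[P] P[(fun ω => φ (Y ω)) | m]

/-!
A pair `(X, Z)` should be coupled with `(Y, Z)` along the common coordinate `Z` so that
`E[f(X); A] ≤ E[f(Y); A]` for all `A ∈ σ(X, Z)` and all test functions `f` in a max-stable cone.
These are lower bounds on a linear functional of functions of `(x, y, z)` whose value on functions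
of `(y, z)` is prescribed. M. Riesz's extension theorem provides such a positive functional as soon
as no combination of the bounds contradicts the prescribed values. This is where max-stability and
the conditional order enter: if `α(z, x)(y) ≤ H(y, z)`, then `sup_x α(z, x)` is again a test
function, so `E[α(Z, X)(X)] ≤ E[(sup_x α(Z, x))(X)] ≤ E[(sup_x α(Z, x))(Y)] ≤ E[H(Y, Z)]`.

The functional need not be countably additive a priori. On rectangles `A × D` it is, because both
marginals are measures and the one on the Polish factor is tight; `S` may thus be an arbitrary
measurable space. Testing with the constants `±1` shows that `(X, Z)` keeps its law, and testing
with the coordinates gives the submartingale property. The converse is Jensen's inequality.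
-/

open scoped ENNReal Topology

section SetSemiring

variable {α : Type*} {mα : MeasurableSpace α} {C : Set (Set α)}

lemma measure_le_of_isSetSemiring (hC : IsSetSemiring C)
    (hgen : mα = MeasurableSpace.generateFrom C) (huniv : Set.univ ∈ C) {a b : Measure α}
    [IsFiniteMeasure a] [IsFiniteMeasure b] (h : ∀ s ∈ C, b s ≤ a s) : b ≤ a := by
  have h_sup : ∀ t ∈ supClosure C, b t ≤ a t := by
    intro t ht
    obtain ⟨p, hp⟩ := hC.mem_supClosure_iff.1 ht
    have hm : ∀ s ∈ p.parts, MeasurableSet s := fun s hs ↦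
      hgen ▸ MeasurableSpace.measurableSet_generateFrom (hp hs)
    have ht_eq : t = ⋃ s ∈ p.parts, id s :=
      p.sup_parts.symm.trans (Finset.sup_set_eq_biUnion _ _)
    rw [ht_eq, measure_biUnion_finset p.disjoint hm, measure_biUnion_finset p.disjoint hm]
    exact Finset.sum_le_sum fun s hs ↦ h s (hp hs)
  refine Measure.le_iff.2 fun s hs ↦ ENNReal.le_of_forall_pos_le_add fun ε hε _ ↦ ?_
  obtain ⟨t, ht, hts⟩ := exists_measure_symmDiff_lt_of_generateFrom_isSetSemiring (μ := a + b) hC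
    ⟨{Set.univ}, by simp, by simpa using huniv, by simp⟩ hgen hs (ENNReal.coe_pos.2 hε)
  calc b s ≤ b t + b (symmDiff t s) := by
        refine (measure_mono fun x hx ↦ ?_).trans (measure_union_le _ _)
        by_cases hxt : x ∈ t
        exacts [Or.inl hxt, Or.inr (Or.inr ⟨hx, hxt⟩)]
    _ ≤ a t + b (symmDiff t s) := add_le_add_left (h_sup t ht) _
    _ ≤ a s + a (symmDiff t s) + b (symmDiff t s) := by
        gcongr
        refine (measure_mono fun x hx ↦ ?_).trans (measure_union_le _ _)
        by_cases hxs : x ∈ s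
        exacts [Or.inl hxs, Or.inr (Or.inl ⟨hx, hxs⟩)]
    _ ≤ a s + ε := by rw [add_assoc]; gcongr; exact hts.le

lemma setIntegral_nonneg_of_isSetSemiring {Ω : Type*} [MeasurableSpace Ω] {P : Measure Ω}
    (hC : IsSetSemiring C) (hgen : mα = MeasurableSpace.generateFrom C) (huniv : Set.univ ∈ C)
    {V : Ω → α} (hV : Measurable V) {k : Ω → ℝ} (hk : Integrable k P)
    (h : ∀ s ∈ C, 0 ≤ ∫ ω in V ⁻¹' s, k ω ∂P) {s : Set α} (hs : MeasurableSet s) :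
    0 ≤ ∫ ω in V ⁻¹' s, k ω ∂P := by
  let a := (P.withDensity fun ω ↦ ENNReal.ofReal (k ω)).map V
  let b := (P.withDensity fun ω ↦ ENNReal.ofReal (-k ω)).map V
  have := isFiniteMeasure_withDensity_ofReal hk.2
  have := isFiniteMeasure_withDensity_ofReal hk.neg.2
  have nonneg_iff : ∀ t, MeasurableSet t → (0 ≤ ∫ ω in V ⁻¹' t, k ω ∂P ↔ b t ≤ a t) := by
    intro t ht
    rw [Measure.map_apply hV ht, Measure.map_apply hV ht, withDensity_apply _ (hV ht),
      withDensity_apply _ (hV ht), integral_eq_lintegral_pos_part_sub_lintegral_neg_part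
        hk.integrableOn, sub_nonneg]
    exact ENNReal.toReal_le_toReal hk.neg.integrableOn.lintegral_lt_top.ne
      hk.integrableOn.lintegral_lt_top.ne
  have hCm : ∀ t ∈ C, MeasurableSet t := fun t ht ↦
    hgen ▸ MeasurableSpace.measurableSet_generateFrom ht
  exact (nonneg_iff s hs).2 <| measure_le_of_isSetSemiring hC hgen huniv
    (fun t ht ↦ (nonneg_iff t (hCm t ht)).1 (h t ht)) s

end SetSemiring

section Rectangles

/-- The measurable rectangles of a product space, the semiring of sets on which bimeasures live. -/
def measurableRectangles (α β : Type*) [MeasurableSpace α] [MeasurableSpace β] :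
    Set (Set (α × β)) :=
  Set.image2 (· ×ˢ ·) {A | MeasurableSet A} {B | MeasurableSet B}

variable {α β : Type*} [MeasurableSpace α] [MeasurableSpace β]

lemma prod_mem_measurableRectangles {A : Set α} {B : Set β} (hA : MeasurableSet A)
    (hB : MeasurableSet B) : A ×ˢ B ∈ measurableRectangles α β :=
  Set.mem_image2_of_mem hA hB

lemma univ_mem_measurableRectangles : Set.univ ∈ measurableRectangles α β :=
  Set.univ_prod_univ ▸ prod_mem_measurableRectangles .univ .univ

lemma generateFrom_measurableRectangles :
    MeasurableSpace.generateFrom (measurableRectangles α β) = Prod.instMeasurableSpace :=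
  generateFrom_prod

lemma isSetSemiring_measurableRectangles : IsSetSemiring (measurableRectangles α β) where
  empty_mem := Set.empty_prod (t := (∅ : Set β)) ▸ prod_mem_measurableRectangles .empty .empty
  inter_mem := by
    rintro _ ⟨A, hA, B, hB, rfl⟩ _ ⟨A', hA', B', hB', rfl⟩
    rw [Set.prod_inter_prod]
    exact prod_mem_measurableRectangles (hA.inter hA') (hB.inter hB')
  sdiff_eq_sUnion' := by
    classical
    rintro _ ⟨A, hA, B, hB, rfl⟩ _ ⟨A', hA', B', hB', rfl⟩
    refine ⟨{(A \ A') ×ˢ B, (A ∩ A') ×ˢ (B \ B')}, ?_, ?_, ?_⟩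
    · rw [Finset.coe_pair, Set.pair_subset_iff]
      exact ⟨prod_mem_measurableRectangles (hA.diff hA') hB,
        prod_mem_measurableRectangles (hA.inter hA') (hB.diff hB')⟩
    · rw [Finset.coe_pair, Set.PairwiseDisjoint, Set.pairwise_pair]
      have h_disj : Disjoint ((A \ A') ×ˢ B) ((A ∩ A') ×ˢ (B \ B')) :=
        Set.disjoint_left.2 fun p hp hp' ↦ hp.1.2 hp'.1.2
      exact fun _ ↦ ⟨h_disj, h_disj.symm⟩
    · ext ⟨x, y⟩
      simp only [Set.mem_sdiff, Set.mem_prod, Finset.coe_pair, Set.sUnion_insert,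
        Set.sUnion_singleton, Set.mem_union, Set.mem_inter_iff]
      tauto

end Rectangles

section Bimeasure

lemma addContent_le_sum_of_subset_biUnion {α ι : Type*} {C : Set (Set α)} (hC : IsSetSemiring C)
    (m : AddContent ℝ≥0∞ C) {t : Set α} (ht : t ∈ C) {I : Finset ι} {f : ι → Set α}
    (hf : ∀ i ∈ I, f i ∈ C) (htf : t ⊆ ⋃ i ∈ I, f i) : m t ≤ ∑ i ∈ I, m (f i) := by
  have hR := hC.isSetRing_supClosure
  have hf' : ∀ i ∈ I, f i ∈ supClosure C := fun i hi ↦ subset_supClosure (hf i hi)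
  calc m t = m.supClosure hC t := (m.supClosure_apply_of_mem hC ht).symm
    _ ≤ m.supClosure hC (⋃ i ∈ I, f i) := addContent_mono hR.isSetSemiring
        (subset_supClosure ht) (hR.biUnion_mem I hf') htf
    _ ≤ ∑ i ∈ I, m.supClosure hC (f i) := addContent_biUnion_le hR hf'
    _ = ∑ i ∈ I, m (f i) := Finset.sum_congr rfl fun i hi ↦ m.supClosure_apply_of_mem hC (hf i hi)

lemma exists_monotone_prod_subset_of_isCompact {E W : Type*} [TopologicalSpace E]
    [MeasurableSpace W] {K : Set E}
    (hK : IsCompact K) {D : Set W} {U : ℕ → Set E} (hU : ∀ i, IsOpen (U i)) {B : ℕ → Set W}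
    (hB : ∀ i, MeasurableSet (B i)) (hcov : K ×ˢ D ⊆ ⋃ i, U i ×ˢ B i) :
    ∃ G : ℕ → Set W, (∀ n, MeasurableSet (G n)) ∧ Monotone G ∧ D ⊆ ⋃ n, G n ∧
      ∀ n, K ×ˢ G n ⊆ ⋃ i ∈ Finset.range n, U i ×ˢ B i := by
  classical
  let 𝒥 (n : ℕ) : Finset (Finset ℕ) := {J ∈ (Finset.range n).powerset | K ⊆ ⋃ i ∈ J, U i}
  have mem_𝒥 : ∀ {n J}, J ∈ 𝒥 n ↔ J ⊆ Finset.range n ∧ K ⊆ ⋃ i ∈ J, U i := by simp [𝒥]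
  refine ⟨fun n ↦ ⋃ J ∈ 𝒥 n, ⋂ i ∈ J, B i, fun n ↦ ?_, fun a b hab ↦ ?_, fun w hw ↦ ?_, fun n ↦ ?_⟩
  · exact Finset.measurableSet_biUnion _ fun J _ ↦ Finset.measurableSet_biInter _ fun i _ ↦ hB i
  · exact Set.biUnion_subset_biUnion_left
      (Finset.filter_subset_filter _ (Finset.powerset_mono.2 (Finset.range_mono hab)))
  · have hKw : K ⊆ ⋃ i ∈ {i | w ∈ B i}, U i := fun x hx ↦ by
      obtain ⟨i, hxi, hwi⟩ := Set.mem_iUnion.1 (hcov (Set.mk_mem_prod hx hw))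
      exact Set.mem_biUnion hwi hxi
    obtain ⟨J, hJB, hJ, hKJ⟩ := hK.elim_finite_subcover_image (fun i _ ↦ hU i) hKw
    obtain ⟨n, hn⟩ := hJ.toFinset.exists_nat_subset_range
    exact Set.mem_iUnion.2 ⟨n, Set.mem_biUnion (mem_𝒥.2 ⟨hn, by simpa using hKJ⟩)
      (Set.mem_iInter₂.2 fun i hi ↦ hJB (hJ.mem_toFinset.1 hi))⟩
  · rintro ⟨x, w⟩ ⟨hx, hw⟩
    obtain ⟨J, hJ, hwJ⟩ := Set.mem_iUnion₂.1 hw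
    obtain ⟨i, hiJ, hxi⟩ := Set.mem_iUnion₂.1 ((mem_𝒥.1 hJ).2 hx)
    exact Set.mem_biUnion ((mem_𝒥.1 hJ).1 hiJ) ⟨hxi, Set.mem_iInter₂.1 hwJ i hiJ⟩

variable {E W : Type*} [MeasurableSpace E] [MeasurableSpace W]
  {m : AddContent ℝ≥0∞ (measurableRectangles E W)}

lemma addContent_prod_mono {A A' : Set E} {D D' : Set W} (hA : MeasurableSet A)
    (hA' : MeasurableSet A') (hD : MeasurableSet D) (hD' : MeasurableSet D') (hAA' : A ⊆ A')
    (hDD' : D ⊆ D') : m (A ×ˢ D) ≤ m (A' ×ˢ D') :=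
  addContent_mono isSetSemiring_measurableRectangles (prod_mem_measurableRectangles hA hD)
    (prod_mem_measurableRectangles hA' hD') (Set.prod_mono hAA' hDD')

lemma addContent_prod_le_add {A A' : Set E} {D D' : Set W} (hA : MeasurableSet A)
    (hA' : MeasurableSet A') (hD : MeasurableSet D) (hD' : MeasurableSet D') :
    m (A ×ˢ D) ≤ m (A' ×ˢ D') + m ((A \ A') ×ˢ D) + m (A ×ˢ (D \ D')) := by
  let f : Fin 3 → Set (E × W) := ![A' ×ˢ D', (A \ A') ×ˢ D, A ×ˢ (D \ D')]
  have hf : ∀ i ∈ Finset.univ, f i ∈ measurableRectangles E W := by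
    simp only [f, Finset.mem_univ, forall_const, Fin.forall_fin_succ, Matrix.cons_val_zero,
      Matrix.cons_val_succ, IsEmpty.forall_iff, and_true]
    exact ⟨prod_mem_measurableRectangles hA' hD', prod_mem_measurableRectangles (hA.diff hA') hD,
      prod_mem_measurableRectangles hA (hD.diff hD')⟩
  refine (addContent_le_sum_of_subset_biUnion isSetSemiring_measurableRectangles m
    (prod_mem_measurableRectangles hA hD) hf ?_).trans_eq (by simp [f, Fin.sum_univ_three])
  rintro ⟨x, w⟩ ⟨hx, hw⟩
  simp only [f, Finset.mem_univ, Set.iUnion_true, Set.mem_iUnion, Fin.exists_fin_succ,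
    Matrix.cons_val_zero, Matrix.cons_val_succ, Set.mem_prod, Set.mem_sdiff]
  tauto

lemma addContent_isCompact_prod_le_tsum [TopologicalSpace E] [OpensMeasurableSpace E] [T2Space E]
    {Q : Measure W} [IsFiniteMeasure Q]
    (hsnd : ∀ D, MeasurableSet D → m (Set.univ ×ˢ D) ≤ Q D) {K : Set E} (hK : IsCompact K)
    {D : Set W} (hD : MeasurableSet D) {U : ℕ → Set E} (hU : ∀ i, IsOpen (U i))
    {B : ℕ → Set W} (hB : ∀ i, MeasurableSet (B i)) (hcov : K ×ˢ D ⊆ ⋃ i, U i ×ˢ B i) :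
    m (K ×ˢ D) ≤ ∑' i, m (U i ×ˢ B i) := by
  obtain ⟨G, hG, hG_mono, hDG, hKG⟩ := exists_monotone_prod_subset_of_isCompact hK hU hB hcov
  have h_fin : ∀ n, m (K ×ˢ G n) ≤ ∑' i, m (U i ×ˢ B i) := fun n ↦
    (addContent_le_sum_of_subset_biUnion isSetSemiring_measurableRectangles m
      (prod_mem_measurableRectangles hK.measurableSet (hG n))
      (fun i _ ↦ prod_mem_measurableRectangles (hU i).measurableSet (hB i)) (hKG n)).trans
      (ENNReal.sum_le_tsum _)
  have h_lim : Tendsto (fun n ↦ Q (D \ G n)) atTop (𝓝 0) := by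
    rw [← measure_empty (μ := Q), ← Set.sdiff_eq_empty.2 hDG, Set.sdiff_iUnion]
    exact tendsto_measure_iInter_atTop (fun n ↦ (hD.diff (hG n)).nullMeasurableSet)
      (fun a b hab ↦ Set.sdiff_subset_sdiff_right (hG_mono hab)) ⟨0, measure_ne_top _ _⟩
  refine ge_of_tendsto' (by simpa using h_lim.const_add (∑' i, m (U i ×ˢ B i))) fun n ↦ ?_
  calc m (K ×ˢ D) ≤ m (K ×ˢ G n) + m ((K \ K) ×ˢ D) + m (K ×ˢ (D \ G n)) :=
        addContent_prod_le_add hK.measurableSet hK.measurableSet hD (hG n)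
    _ = m (K ×ˢ G n) + m (K ×ˢ (D \ G n)) := by simp
    _ ≤ ∑' i, m (U i ×ˢ B i) + Q (D \ G n) := by
        refine add_le_add (h_fin n) (le_trans ?_ (hsnd _ (hD.diff (hG n))))
        exact addContent_prod_mono hK.measurableSet .univ (hD.diff (hG n)) (hD.diff (hG n))
          (Set.subset_univ K) subset_rfl

variable [TopologicalSpace E] [PolishSpace E] [BorelSpace E] {μ : Measure E} [IsFiniteMeasure μ]
  {Q : Measure W} [IsFiniteMeasure Q]

/- Replacing `A` by a compact subset and each `A i` by an open superset costs arbitrarily little,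
and it lets compactness extract a finite cover of every fibre over `W`. -/
theorem isSigmaSubadditive_of_marginals_le
    (hfst : ∀ A, MeasurableSet A → m (A ×ˢ Set.univ) ≤ μ A)
    (hsnd : ∀ D, MeasurableSet D → m (Set.univ ×ˢ D) ≤ Q D) : m.IsSigmaSubadditive := by
  have h_fst_le : ∀ {A : Set E} {D : Set W}, MeasurableSet A → MeasurableSet D →
      m (A ×ˢ D) ≤ μ A := fun {A D} hA hD ↦
    (addContent_prod_mono hA hA hD .univ subset_rfl (Set.subset_univ D)).trans (hfst A hA)
  intro f hf hfU
  choose A hA B hB hAB using hf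
  obtain ⟨A₀, hA₀, D, hD, hAD⟩ := hfU
  simp only [← hAB] at hAD ⊢
  rw [← hAD]
  refine ENNReal.le_of_forall_pos_le_add fun ε hε _ ↦ ?_
  have hε2 : (ε : ℝ≥0∞) / 2 ≠ 0 := (ENNReal.half_pos (ENNReal.coe_pos.2 hε).ne').ne'
  obtain ⟨δ, hδ, hδ_sum⟩ := ENNReal.exists_pos_sum_of_countable' hε2 ℕ
  obtain ⟨K, hKA, hK, hK_lt⟩ := hA₀.exists_isCompact_sdiff_lt (measure_ne_top μ _) hε2
  choose U hAU hU _ hU_lt using fun i ↦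
    (hA i).exists_isOpen_sdiff_lt (measure_ne_top μ _) (hδ i).ne'
  have hcov : K ×ˢ D ⊆ ⋃ i, U i ×ˢ B i := calc
    K ×ˢ D ⊆ ⋃ i, A i ×ˢ B i := (Set.prod_mono_left hKA).trans hAD.subset
    _ ⊆ ⋃ i, U i ×ˢ B i := Set.iUnion_mono fun i ↦ Set.prod_mono_left (hAU i)
  have hUB : ∀ i, m (U i ×ˢ B i) ≤ m (A i ×ˢ B i) + δ i := fun i ↦ calc
    m (U i ×ˢ B i) ≤ m (A i ×ˢ B i) + m ((U i \ A i) ×ˢ B i) + m (U i ×ˢ (B i \ B i)) :=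
      addContent_prod_le_add (hU i).measurableSet (hA i) (hB i) (hB i)
    _ = m (A i ×ˢ B i) + m ((U i \ A i) ×ˢ B i) := by simp
    _ ≤ m (A i ×ˢ B i) + δ i := by
      gcongr
      exact (h_fst_le ((hU i).measurableSet.diff (hA i)) (hB i)).trans (hU_lt i).le
  calc m (A₀ ×ˢ D) ≤ m (K ×ˢ D) + m ((A₀ \ K) ×ˢ D) + m (A₀ ×ˢ (D \ D)) :=
        addContent_prod_le_add hA₀ hK.measurableSet hD hD
    _ = m (K ×ˢ D) + m ((A₀ \ K) ×ˢ D) := by simp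
    _ ≤ ∑' i, (m (A i ×ˢ B i) + δ i) + ε / 2 :=
        add_le_add ((addContent_isCompact_prod_le_tsum hsnd hK hD hU hB hcov).trans
          (ENNReal.tsum_le_tsum hUB)) ((h_fst_le (hA₀.diff hK.measurableSet) hD).trans hK_lt.le)
    _ ≤ ∑' i, m (A i ×ˢ B i) + ε / 2 + ε / 2 := by rw [ENNReal.tsum_add]; gcongr
    _ = ∑' i, m (A i ×ˢ B i) + ε := by rw [add_assoc, ENNReal.add_halves]

end Bimeasure

section PositiveFunctional

variable {E W : Type*} [MeasurableSpace W] {Q : Measure W}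

/-- The functions on `E × W` dominated by a `Q`-integrable function of the second coordinate: the
space on which a functional with second marginal `Q` is controlled. -/
def dominated (E : Type*) {W : Type*} [MeasurableSpace W] (Q : Measure W) :
    Submodule ℝ (E × W → ℝ) where
  carrier := {h | ∃ H : W → ℝ, Integrable H Q ∧ ∀ p, |h p| ≤ H p.2}
  zero_mem' := ⟨0, integrable_zero _ _ _, by simp⟩
  add_mem' := by
    rintro h h' ⟨H, hH, hle⟩ ⟨H', hH', hle'⟩
    exact ⟨H + H', hH.add hH', fun p ↦ (abs_add_le _ _).trans (add_le_add (hle p) (hle' p))⟩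
  smul_mem' := by
    rintro c h ⟨H, hH, hle⟩
    refine ⟨|c| • H, hH.smul _, fun p ↦ ?_⟩
    simpa only [Pi.smul_apply, smul_eq_mul, abs_mul] using
      mul_le_mul_of_nonneg_left (hle p) (abs_nonneg c)

lemma comp_snd_mem_dominated {H : W → ℝ} (hH : Integrable H Q) :
    (H ∘ Prod.snd : E × W → ℝ) ∈ dominated E Q :=
  ⟨fun w ↦ |H w|, hH.abs, fun _ ↦ le_rfl⟩

lemma indicator_mem_dominated {h : E × W → ℝ} (hh : h ∈ dominated E Q) (s : Set (E × W)) :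
    s.indicator h ∈ dominated E Q := by
  obtain ⟨H, hH, hle⟩ := hh
  refine ⟨H, hH, fun p ↦ ?_⟩
  by_cases hp : p ∈ s
  · simpa only [Set.indicator_of_mem hp] using hle p
  · simpa only [Set.indicator_of_notMem hp, abs_zero] using (abs_nonneg _).trans (hle p)

lemma one_mem_dominated [IsFiniteMeasure Q] : (1 : E × W → ℝ) ∈ dominated E Q :=
  comp_snd_mem_dominated (H := 1) (integrable_const 1)

/-- A functional that stands for integration against a measure on `E × W` with second marginal `Q`.
Only its values on `dominated E Q` are meaningful. -/
structure IsCouplingFunctional (Q : Measure W) (l : (E × W → ℝ) →ₗ[ℝ] ℝ) : Prop where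
  nonneg : ∀ h ∈ dominated E Q, 0 ≤ h → 0 ≤ l h
  comp_snd : ∀ H, Integrable H Q → l (H ∘ Prod.snd) = ∫ w, H w ∂Q

/-- The integral against `Q` of a function of the second coordinate alone, as a partial functional
on `dominated E Q`; such a function is read off on the slice over an arbitrary `x₀`. -/
def sliceIntegral (Q : Measure W) (x₀ : E) : dominated E Q →ₗ.[ℝ] ℝ where
  domain :=
    { carrier := {h | Integrable (fun w ↦ h.1 (x₀, w)) Q ∧ ∀ x w, h.1 (x, w) = h.1 (x₀, w)}
      zero_mem' := ⟨integrable_zero _ _ _, fun _ _ ↦ rfl⟩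
      add_mem' := fun hh hh' ↦
        ⟨hh.1.add hh'.1, fun x w ↦ congrArg₂ (· + ·) (hh.2 x w) (hh'.2 x w)⟩
      smul_mem' := fun c _ hh ↦ ⟨hh.1.smul c, fun x w ↦ congrArg (c • ·) (hh.2 x w)⟩ }
  toFun :=
    { toFun := fun h ↦ ∫ w, h.1.1 (x₀, w) ∂Q
      map_add' := fun h h' ↦ integral_add h.2.1 h'.2.1
      map_smul' := fun c _ ↦ integral_smul c _ }

/-- The functions on which a positive functional `l` with second marginal `Q` has to be nonnegative
in order that `c ≤ l k` for all `(k, c)` in the cone `𝒦`. -/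
def constraintCone (Q : Measure W) (𝒦 : PointedCone ℝ ((E × W → ℝ) × ℝ)) :
    PointedCone ℝ (dominated E Q) where
  carrier := {h | ∃ q ∈ 𝒦, ∀ p, q.1 p ≤ h.1 p + q.2}
  zero_mem' := ⟨0, 𝒦.zero_mem, by simp⟩
  add_mem' := by
    rintro h h' ⟨q, hq, hle⟩ ⟨q', hq', hle'⟩
    refine ⟨q + q', 𝒦.add_mem hq hq', fun p ↦ (add_le_add (hle p) (hle' p)).trans_eq ?_⟩
    exact add_add_add_comm _ _ _ _
  smul_mem' := by
    rintro c h ⟨q, hq, hle⟩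
    refine ⟨c • q, Submodule.smul_mem 𝒦 c hq, fun p ↦ ?_⟩
    exact (mul_le_mul_of_nonneg_left (hle p) c.2).trans_eq (mul_add _ _ _)

theorem exists_isCouplingFunctional [Nonempty E] [IsProbabilityMeasure Q]
    (𝒦 : PointedCone ℝ ((E × W → ℝ) × ℝ))
    (h𝒦 : ∀ q ∈ 𝒦, ∀ H, Integrable H Q → (∀ x w, q.1 (x, w) ≤ H w) → q.2 ≤ ∫ w, H w ∂Q) :
    ∃ l : (E × W → ℝ) →ₗ[ℝ] ℝ, IsCouplingFunctional Q l ∧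
      ∀ q ∈ 𝒦, q.1 ∈ dominated E Q → q.2 ≤ l q.1 := by
  obtain ⟨x₀⟩ := ‹Nonempty E›
  have h_nonneg : ∀ h : (sliceIntegral Q x₀).domain, (h : dominated E Q) ∈ constraintCone Q 𝒦 →
      0 ≤ sliceIntegral Q x₀ h := by
    rintro ⟨h, h_int, h_slice⟩ ⟨q, hq, hle⟩
    have := h𝒦 q hq (fun w ↦ h.1 (x₀, w) + q.2) (h_int.add (integrable_const _)) fun x w ↦
      (hle (x, w)).trans_eq (by rw [h_slice])
    rwa [integral_add h_int (integrable_const _), integral_const, probReal_univ, one_smul,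
      le_add_iff_nonneg_left] at this
  have h_nonneg_mem : ∀ h : dominated E Q, 0 ≤ h.1 → h ∈ constraintCone Q 𝒦 := fun h hh ↦
    ⟨0, 𝒦.zero_mem, fun p ↦ (hh p).trans_eq (add_zero _).symm⟩
  have h_dense : ∀ h : dominated E Q, ∃ g : (sliceIntegral Q x₀).domain,
      (g : dominated E Q) + h ∈ constraintCone Q 𝒦 := by
    rintro ⟨h, H, hH, hle⟩
    refine ⟨⟨⟨_, comp_snd_mem_dominated hH⟩, hH, fun _ _ ↦ rfl⟩, h_nonneg_mem _ fun p ↦ ?_⟩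
    exact neg_le_iff_add_nonneg'.1 (neg_le_of_abs_le (hle p))
  obtain ⟨l₀, hl₀, hl₀_nonneg⟩ := riesz_extension _ _ h_nonneg h_dense
  obtain ⟨l, rfl⟩ := l₀.exists_extend
  have h_comp_snd : ∀ H, Integrable H Q → l (H ∘ Prod.snd) = ∫ w, H w ∂Q := fun H hH ↦
    hl₀ ⟨⟨_, comp_snd_mem_dominated hH⟩, hH, fun _ _ ↦ rfl⟩
  refine ⟨l, ⟨fun h hh h0 ↦ hl₀_nonneg ⟨h, hh⟩ (h_nonneg_mem _ h0), h_comp_snd⟩, ?_⟩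
  intro q hq hq_dom
  let c : W → ℝ := fun _ ↦ q.2
  have hc : Integrable c Q := integrable_const _
  have : 0 ≤ l (q.1 - c ∘ Prod.snd) :=
    hl₀_nonneg ⟨_, sub_mem hq_dom (comp_snd_mem_dominated hc)⟩
      ⟨q, hq, fun p ↦ (sub_add_cancel _ _).ge⟩
  rwa [map_sub, h_comp_snd c hc, integral_const, probReal_univ, one_smul, sub_nonneg] at this

lemma eq_zero_of_indicator_eq_zero {T : (W → ℝ) → ℝ} (C : ℝ)
    (h_add : ∀ H H', Integrable H Q → Integrable H' Q → T (H + H') = T H + T H')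
    (h_bound : ∀ H, Integrable H Q → |T H| ≤ C * ∫ w, |H w| ∂Q)
    (h_ind : ∀ (c : ℝ) D, MeasurableSet D → T (D.indicator fun _ ↦ c) = 0)
    {H : W → ℝ} (hH : Integrable H Q) : T H = 0 := by
  have h_dist : ∀ H H', Integrable H Q → Integrable H' Q →
      |T H - T H'| ≤ C * ∫ w, |H w - H' w| ∂Q := fun H H' hH hH' ↦ by
    have h_sub := h_add (H - H') H' (hH.sub hH') hH'
    rw [sub_add_cancel] at h_sub
    rw [h_sub, add_sub_cancel_right]
    exact h_bound _ (hH.sub hH')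
  refine Integrable.induction (fun H ↦ T H = 0) ?_ ?_ ?_ ?_ hH
  · exact fun c D hD _ ↦ h_ind c D hD
  · intro H H' _ hH hH' hT hT'
    rw [h_add H H' hH hH', hT, hT', add_zero]
  · have h_lip : LipschitzWith C.toNNReal fun H : W →₁[Q] ℝ ↦ T H :=
      LipschitzWith.of_dist_le_mul fun H H' ↦ by
        rw [L1.dist_eq_integral_dist]
        refine (h_dist H H' (L1.integrable_coeFn H) (L1.integrable_coeFn H')).trans ?_
        exact mul_le_mul_of_nonneg_right (Real.le_coe_toNNReal C)
          (integral_nonneg fun _ ↦ abs_nonneg _)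
    exact isClosed_eq h_lip.continuous continuous_const
  · intro H H' hHH' hH hT
    have h_zero : ∫ w, |H' w - H w| ∂Q = 0 := integral_eq_zero_of_ae <| by
      filter_upwards [hHH'] with w hw
      rw [hw, sub_self, abs_zero, Pi.zero_apply]
    simpa only [hT, sub_zero, h_zero, mul_zero, abs_nonpos_iff] using
      h_dist H' H (hH.congr hHH') hH

lemma abs_setIntegral_snd_le [MeasurableSpace E] (π : Measure (E × W)) (s : Set (E × W))
    {H : W → ℝ} (hH : Integrable H (π.map Prod.snd)) :
    |∫ p in s, H p.2 ∂π| ≤ ∫ w, |H w| ∂π.map Prod.snd := calc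
  |∫ p in s, H p.2 ∂π| ≤ ∫ p in s, |H p.2| ∂π := abs_integral_le_integral_abs
  _ ≤ ∫ p, |H p.2| ∂π := setIntegral_le_integral (hH.comp_measurable measurable_snd).abs
    (ae_of_all _ fun _ ↦ abs_nonneg _)
  _ = ∫ w, |H w| ∂π.map Prod.snd :=
    (integral_map measurable_snd.aemeasurable hH.abs.aestronglyMeasurable).symm

namespace IsCouplingFunctional

variable {l : (E × W → ℝ) →ₗ[ℝ] ℝ}

lemma mono (hl : IsCouplingFunctional Q l) {h h' : E × W → ℝ} (hh : h ∈ dominated E Q)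
    (hh' : h' ∈ dominated E Q) (hle : h ≤ h') : l h ≤ l h' := by
  rw [← sub_nonneg, ← map_sub]
  exact hl.nonneg _ (sub_mem hh' hh) (sub_nonneg.2 hle)

lemma abs_le (hl : IsCouplingFunctional Q l) {h : E × W → ℝ} {H : W → ℝ} (hH : Integrable H Q)
    (hle : ∀ p, |h p| ≤ H p.2) : |l h| ≤ ∫ w, H w ∂Q := by
  have hh : h ∈ dominated E Q := ⟨H, hH, hle⟩
  have hH' := comp_snd_mem_dominated (E := E) hH
  rw [← hl.comp_snd H hH, abs_le', ← map_neg]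
  exact ⟨hl.mono hh hH' fun p ↦ le_of_abs_le (hle p),
    hl.mono (neg_mem hh) hH' fun p ↦ neg_le_of_neg_le (neg_le_of_abs_le (hle p))⟩

variable [IsFiniteMeasure Q]

lemma apply_indicator_one_nonneg (hl : IsCouplingFunctional Q l) (s : Set (E × W)) :
    0 ≤ l (s.indicator 1) :=
  hl.nonneg _ (indicator_mem_dominated one_mem_dominated s)
    (Set.indicator_nonneg fun _ _ ↦ zero_le_one)

variable [MeasurableSpace E]

/-- The values of a coupling functional on indicators of measurable rectangles. -/
def content (hl : IsCouplingFunctional Q l) : AddContent ℝ≥0∞ (measurableRectangles E W) where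
  toFun s := ENNReal.ofReal (l (s.indicator 1))
  empty' := by rw [Set.indicator_empty, ← Pi.zero_def, map_zero, ENNReal.ofReal_zero]
  sUnion' I _ hI _ := by
    rw [← ENNReal.ofReal_sum_of_nonneg fun s _ ↦ hl.apply_indicator_one_nonneg s, ← map_sum,
      Set.sUnion_eq_biUnion, Finset.set_biUnion_coe]
    congr 2
    funext p
    rw [Finset.sum_apply]
    exact Finset.indicator_biUnion_apply I id hI p

lemma content_univ_prod (hl : IsCouplingFunctional Q l) {D : Set W} (hD : MeasurableSet D) :
    hl.content (Set.univ ×ˢ D) = Q D := by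
  have h_eq : (Set.univ ×ˢ D).indicator (1 : E × W → ℝ) = D.indicator 1 ∘ Prod.snd := by
    rw [Set.univ_prod]; rfl
  change ENNReal.ofReal (l _) = _
  rw [h_eq, hl.comp_snd (D.indicator 1) ((integrable_const 1).indicator hD),
    integral_indicator_one hD, ofReal_measureReal]

lemma setIntegral_indicator_snd_eq (hl : IsCouplingFunctional Q l) {π : Measure (E × W)} {A : Set E}
    {D D' : Set W} (hD' : MeasurableSet D')
    (hπ : π (A ×ˢ (D ∩ D')) = ENNReal.ofReal (l ((A ×ˢ (D ∩ D')).indicator 1))) (c : ℝ) :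
    ∫ p in A ×ˢ D, D'.indicator (fun _ ↦ c) p.2 ∂π =
      l ((A ×ˢ D).indicator (D'.indicator (fun _ ↦ c) ∘ Prod.snd)) := by
  have h_snd : D'.indicator (fun _ ↦ c) ∘ Prod.snd =
      (Set.univ ×ˢ D').indicator fun _ : E × W ↦ c := by
    rw [Set.univ_prod]; rfl
  have h_prod : A ×ˢ D ∩ Set.univ ×ˢ D' = A ×ˢ (D ∩ D') := by
    rw [Set.prod_inter_prod, Set.inter_univ]
  have h_const : (A ×ˢ (D ∩ D')).indicator (fun _ : E × W ↦ c) =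
      c • (A ×ˢ (D ∩ D')).indicator 1 := by
    refine .trans ?_ (Set.indicator_const_smul _ c 1)
    simp only [Pi.one_apply, smul_eq_mul, mul_one]
  change ∫ p in A ×ˢ D, (D'.indicator (fun _ ↦ c) ∘ Prod.snd) p ∂π = _
  rw [h_snd, setIntegral_indicator (MeasurableSet.univ.prod hD'), Set.indicator_indicator, h_prod,
    h_const, map_smul, setIntegral_const, measureReal_def, hπ,
    ENNReal.toReal_ofReal (hl.apply_indicator_one_nonneg _), smul_eq_mul, smul_eq_mul, mul_comm]

lemma setIntegral_eq_apply_indicator (hl : IsCouplingFunctional Q l) {π : Measure (E × W)}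
    (hsnd : π.map Prod.snd = Q) {A : Set E} {D : Set W} (hD : MeasurableSet D)
    (hπ : ∀ D, MeasurableSet D → π (A ×ˢ D) = ENNReal.ofReal (l ((A ×ˢ D).indicator 1)))
    {H : W → ℝ} (hH : Integrable H Q) :
    ∫ p in A ×ˢ D, H p.2 ∂π = l ((A ×ˢ D).indicator (H ∘ Prod.snd)) := by
  subst hsnd
  rw [← sub_eq_zero]
  refine eq_zero_of_indicator_eq_zero
    (T := fun H ↦ ∫ p in A ×ˢ D, H p.2 ∂π - l ((A ×ˢ D).indicator (H ∘ Prod.snd)))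
    2 (fun H H' hH hH' ↦ ?_) (fun H hH ↦ ?_)
    (fun c D' hD' ↦ sub_eq_zero.2 <|
      hl.setIntegral_indicator_snd_eq hD' (hπ _ (hD.inter hD')) c) hH
  · have h_add : (A ×ˢ D).indicator ((H + H') ∘ Prod.snd) =
        (A ×ˢ D).indicator (H ∘ Prod.snd) + (A ×ˢ D).indicator (H' ∘ Prod.snd) :=
      Set.indicator_add _ _ _
    have h_int : ∫ p in A ×ˢ D, (H + H') p.2 ∂π =
        ∫ p in A ×ˢ D, H p.2 ∂π + ∫ p in A ×ˢ D, H' p.2 ∂π :=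
      integral_add (hH.comp_measurable measurable_snd).integrableOn
        (hH'.comp_measurable measurable_snd).integrableOn
    rw [h_add, map_add, h_int, add_sub_add_comm]
  · have h_l : |l ((A ×ˢ D).indicator (H ∘ Prod.snd))| ≤ ∫ w, |H w| ∂π.map Prod.snd :=
      hl.abs_le hH.abs fun p ↦ norm_indicator_le_norm_self (H ∘ Prod.snd) p
    rw [two_mul]
    exact (abs_sub _ _).trans (add_le_add (abs_setIntegral_snd_le π _ hH) h_l)

variable [StandardBorelSpace E] {μ : Measure E} [IsFiniteMeasure μ]

theorem exists_measure (hl : IsCouplingFunctional Q l)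
    (hμ : ∀ A, MeasurableSet A → l ((A ×ˢ Set.univ).indicator 1) = μ.real A) :
    ∃ π : Measure (E × W), π.map Prod.snd = Q ∧ ∀ A D, MeasurableSet A → MeasurableSet D →
      π (A ×ˢ D) = ENNReal.ofReal (l ((A ×ˢ D).indicator 1)) := by
  let := upgradeStandardBorel E
  have h_sub : hl.content.IsSigmaSubadditive := isSigmaSubadditive_of_marginals_le (μ := μ) (Q := Q)
    (fun A hA ↦ (ENNReal.ofReal_le_ofReal (hμ A hA).le).trans_eq ofReal_measureReal)
    (fun D hD ↦ (hl.content_univ_prod hD).le)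
  let π := hl.content.measure isSetSemiring_measurableRectangles
    generateFrom_measurableRectangles.ge h_sub
  have hπ : ∀ A D, MeasurableSet A → MeasurableSet D → π (A ×ˢ D) = hl.content (A ×ˢ D) :=
    fun A D hA hD ↦ hl.content.measure_eq _ generateFrom_measurableRectangles.symm h_sub
      (prod_mem_measurableRectangles hA hD)
  refine ⟨π, Measure.ext fun D hD ↦ ?_, hπ⟩
  rw [Measure.map_apply measurable_snd hD, ← Set.univ_prod, hπ _ _ .univ hD,
    hl.content_univ_prod hD]

end IsCouplingFunctional

end PositiveFunctional

section Integral

variable {Ω : Type*} {m m0 : MeasurableSpace Ω} {P : Measure Ω}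

lemma biUnion_range_preimage_singleton {ι : Type*} (τ : SimpleFunc Ω ι) :
    ⋃ i ∈ τ.range, τ ⁻¹' {i} = Set.univ :=
  Set.eq_univ_of_forall fun ω ↦ Set.mem_biUnion (τ.mem_range_self ω) rfl

lemma integrable_simpleFunc_apply {ι : Type*} (τ : SimpleFunc Ω ι) {F : ι → Ω → ℝ}
    (hF : ∀ ω, Integrable (F (τ ω)) P) : Integrable (fun ω ↦ F (τ ω) ω) P := by
  rw [← integrableOn_univ, ← biUnion_range_preimage_singleton τ, integrableOn_finset_iUnion]
  intro i hi
  obtain ⟨ω, rfl⟩ := SimpleFunc.mem_range.1 hi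
  exact (hF ω).integrableOn.congr_fun (fun ω' hω' ↦ by rw [hω']) (τ.measurableSet_fiber _)

lemma integral_le_integral_of_fibers {ι : Type*} (τ : SimpleFunc Ω ι) {f g : Ω → ℝ}
    (hf : Integrable f P) (hg : Integrable g P)
    (h : ∀ ω, ∫ ω' in τ ⁻¹' {τ ω}, f ω' ∂P ≤ ∫ ω' in τ ⁻¹' {τ ω}, g ω' ∂P) :
    ∫ ω, f ω ∂P ≤ ∫ ω, g ω ∂P := by
  have h_sum : ∀ k : Ω → ℝ, Integrable k P →
      ∫ ω, k ω ∂P = ∑ i ∈ τ.range, ∫ ω in τ ⁻¹' {i}, k ω ∂P := by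
    intro k hk
    rw [← setIntegral_univ, ← biUnion_range_preimage_singleton τ]
    exact integral_biUnion_finset _ (fun i _ ↦ τ.measurableSet_fiber i)
      (Set.pairwiseDisjoint_fiber τ _) fun _ _ ↦ hk.integrableOn
  rw [h_sum f hf, h_sum g hg]
  refine Finset.sum_le_sum fun i hi ↦ ?_
  obtain ⟨ω, rfl⟩ := SimpleFunc.mem_range.1 hi
  exact h ω

lemma condExp_le_condExp_iff_setIntegral_le [IsFiniteMeasure P] (hm : m ≤ m0) {f g : Ω → ℝ}
    (hf : Integrable f P) (hg : Integrable g P) :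
    P[f | m] ≤ᵐ[P] P[g | m] ↔
      ∀ s, MeasurableSet[m] s → ∫ ω in s, f ω ∂P ≤ ∫ ω in s, g ω ∂P := by
  refine ⟨fun h s hs ↦ ?_, fun h ↦ ae_le_of_ae_le_trim (hm := hm) ?_⟩
  · rw [← setIntegral_condExp hm hf hs, ← setIntegral_condExp hm hg hs]
    exact setIntegral_mono_ae integrable_condExp.integrableOn integrable_condExp.integrableOn h
  · refine ae_le_of_forall_setIntegral_le (integrable_condExp.trim hm stronglyMeasurable_condExp)
      (integrable_condExp.trim hm stronglyMeasurable_condExp) fun s hs _ ↦ ?_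
    rw [← setIntegral_trim hm stronglyMeasurable_condExp hs,
      ← setIntegral_trim hm stronglyMeasurable_condExp hs, setIntegral_condExp hm hf hs,
      setIntegral_condExp hm hg hs]
    exact h s hs

variable {Ω' α : Type*} [MeasurableSpace Ω'] {P' : Measure Ω'} [MeasurableSpace α] {V : Ω → α}
  {V' : Ω' → α}

lemma setIntegral_comp_eq_of_identDistrib (h : IdentDistrib V V' P P') {f : α → ℝ}
    (hf : Measurable f) {s : Set α} (hs : MeasurableSet s) :
    ∫ ω in V ⁻¹' s, f (V ω) ∂P = ∫ ω in V' ⁻¹' s, f (V' ω) ∂P' := by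
  rw [← setIntegral_map hs hf.aestronglyMeasurable h.aemeasurable_fst,
    ← setIntegral_map hs hf.aestronglyMeasurable h.aemeasurable_snd, h.map_eq]

lemma ae_le_condExp_of_isSetSemiring [IsFiniteMeasure P] {C : Set (Set α)} (hC : IsSetSemiring C)
    (hgen : ‹MeasurableSpace α› = MeasurableSpace.generateFrom C) (huniv : Set.univ ∈ C)
    (hV : Measurable V) {f : α → ℝ} (hf : Measurable f) (hfV : Integrable (fun ω ↦ f (V ω)) P)
    {k : Ω → ℝ} (hk : Integrable k P)
    (h : ∀ s ∈ C, ∫ ω in V ⁻¹' s, f (V ω) ∂P ≤ ∫ ω in V ⁻¹' s, k ω ∂P) :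
    (fun ω ↦ f (V ω)) ≤ᵐ[P] P[k | MeasurableSpace.comap V inferInstance] := by
  have h_sub : ∀ s, ∫ ω in V ⁻¹' s, (k - fun ω ↦ f (V ω)) ω ∂P =
      ∫ ω in V ⁻¹' s, k ω ∂P - ∫ ω in V ⁻¹' s, f (V ω) ∂P := fun s ↦
    integral_sub hk.integrableOn hfV.integrableOn
  have hfV_meas : StronglyMeasurable[MeasurableSpace.comap V inferInstance] fun ω ↦ f (V ω) :=
    (hf.comp (comap_measurable V)).stronglyMeasurable
  rw [← condExp_of_stronglyMeasurable hV.comap_le hfV_meas hfV,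
    condExp_le_condExp_iff_setIntegral_le hV.comap_le hfV hk]
  rintro _ ⟨s, hs, rfl⟩
  rw [← sub_nonneg, ← h_sub]
  refine setIntegral_nonneg_of_isSetSemiring hC hgen huniv hV (hk.sub hfV) (fun t ht ↦ ?_) hs
  rw [h_sub, sub_nonneg]
  exact h t ht

end Integral

section MaxStableCone

lemma preimage_fst_snd_snd_prod {E S : Type*} (A : Set E) (B : Set S) :
    (fun p : E × (E × S) ↦ (p.1, p.2.2)) ⁻¹' A ×ˢ B = A ×ˢ (Set.univ ×ˢ B) := by
  ext p
  simp only [Set.mem_preimage, Set.mem_prod, Set.mem_univ, true_and]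

variable {Ω E S : Type*} [MeasurableSpace Ω] [MeasurableSpace E] [MeasurableSpace S]
  {P : Measure Ω} {X Y : Ω → E} {Z : Ω → S} {𝒜 : PointedCone ℝ (E → ℝ)}

/-- `𝒜` is a max-stable cone of test functions, containing the constants, that orders `X` below `Y`
conditionally on `Z`. -/
structure IsCondOrdered (P : Measure Ω) (X Y : Ω → E) (Z : Ω → S) (𝒜 : PointedCone ℝ (E → ℝ)) :
    Prop where
  supClosed : SupClosed (𝒜 : Set (E → ℝ))
  const_mem : ∀ c : ℝ, (fun _ ↦ c) ∈ 𝒜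
  measurable : ∀ f ∈ 𝒜, Measurable f
  integrable_left : ∀ f ∈ 𝒜, Integrable (fun ω ↦ f (X ω)) P
  integrable_right : ∀ f ∈ 𝒜, Integrable (fun ω ↦ f (Y ω)) P
  setIntegral_le : ∀ f ∈ 𝒜, ∀ B, MeasurableSet B →
    ∫ ω in Z ⁻¹' B, f (X ω) ∂P ≤ ∫ ω in Z ⁻¹' B, f (Y ω) ∂P

namespace IsCondOrdered

lemma exists_isLUB_range_simpleFunc [Nonempty E] (h : IsCondOrdered P X Y Z 𝒜)
    {a : SimpleFunc E (E → ℝ)} (ha : ∀ x, a x ∈ 𝒜) : ∃ f ∈ 𝒜, IsLUB (Set.range a) f := by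
  have h_ne : a.range.Nonempty := ‹Nonempty E›.elim fun x ↦ ⟨_, a.mem_range_self x⟩
  refine ⟨a.range.sup' h_ne id, h.supClosed.finsetSup'_mem h_ne fun g hg ↦ ?_, ?_⟩
  · obtain ⟨x, rfl⟩ := SimpleFunc.mem_range.1 hg
    exact ha x
  · rw [← SimpleFunc.coe_range]
    exact Finset.isLUB_sup' h_ne

lemma integrable_selection (h : IsCondOrdered P X Y Z 𝒜) (hX : Measurable X) (hZ : Measurable Z)
    {α : SimpleFunc S (SimpleFunc E (E → ℝ))} (hα : ∀ z x, α z x ∈ 𝒜) :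
    Integrable (fun ω ↦ α (Z ω) (X ω) (X ω)) P :=
  integrable_simpleFunc_apply ((α.comp Z hZ).bind fun a ↦ a.comp X hX)
    (F := fun f ω ↦ f (X ω)) fun _ ↦ h.integrable_left _ (hα _ _)

/-- The inequalities `E[α(Z, X)(X)] ≤ E[α(Z, X)(Y)]` required of a coupling, where `α` selects one
of finitely many test functions; each is recorded as the function `(x, y, z) ↦ α(z, x)(y)` and the
lower bound on its integral. -/
def constraints (h : IsCondOrdered P X Y Z 𝒜) (hX : Measurable X) (hZ : Measurable Z) :
    PointedCone ℝ ((E × (E × S) → ℝ) × ℝ) where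
  carrier := {q | ∃ α : SimpleFunc S (SimpleFunc E (E → ℝ)), (∀ z x, α z x ∈ 𝒜) ∧
    q = (fun p ↦ α p.2.2 p.1 p.2.1, ∫ ω, α (Z ω) (X ω) (X ω) ∂P)}
  zero_mem' := ⟨0, fun _ _ ↦ 𝒜.zero_mem, Prod.ext rfl (integral_zero _ _).symm⟩
  add_mem' := by
    rintro _ _ ⟨α, hα, rfl⟩ ⟨β, hβ, rfl⟩
    exact ⟨α + β, fun z x ↦ 𝒜.add_mem (hα z x) (hβ z x), Prod.ext rfl
      (integral_add (h.integrable_selection hX hZ hα) (h.integrable_selection hX hZ hβ)).symm⟩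
  smul_mem' := by
    rintro c _ ⟨α, hα, rfl⟩
    exact ⟨(c : ℝ) • α, fun z x ↦ Submodule.smul_mem 𝒜 c (hα z x),
      Prod.ext rfl (integral_const_mul _ _).symm⟩

lemma integral_selection_le (h : IsCondOrdered P X Y Z 𝒜) (hX : Measurable X)
    (hZ : Measurable Z) {α : SimpleFunc S (SimpleFunc E (E → ℝ))} (hα : ∀ z x, α z x ∈ 𝒜)
    {H : E × S → ℝ} (hH : Integrable (fun ω ↦ H (Y ω, Z ω)) P)
    (hle : ∀ x y z, α z x y ≤ H (y, z)) :
    ∫ ω, α (Z ω) (X ω) (X ω) ∂P ≤ ∫ ω, H (Y ω, Z ω) ∂P := by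
  have h_int := h.integrable_selection hX hZ hα
  refine integral_le_integral_of_fibers (α.comp Z hZ) h_int hH fun ω₀ ↦ ?_
  have : Nonempty E := ⟨X ω₀⟩
  obtain ⟨f, hf, hf_lub⟩ := h.exists_isLUB_range_simpleFunc (hα (Z ω₀))
  let s : Set Ω := α.comp Z hZ ⁻¹' {α (Z ω₀)}
  have hs : MeasurableSet s := (α.comp Z hZ).measurableSet_fiber _
  calc ∫ ω in s, α (Z ω) (X ω) (X ω) ∂P
      ≤ ∫ ω in s, f (X ω) ∂P := by
        refine setIntegral_mono_on h_int.integrableOn (h.integrable_left f hf).integrableOn hs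
          fun ω hω ↦ ?_
        rw [show α (Z ω) = α (Z ω₀) from hω]
        exact hf_lub.1 (Set.mem_range_self (X ω)) (X ω)
    _ ≤ ∫ ω in s, f (Y ω) ∂P := h.setIntegral_le f hf _ (α.measurableSet_fiber _)
    _ ≤ ∫ ω in s, H (Y ω, Z ω) ∂P := by
        refine setIntegral_mono_on (h.integrable_right f hf).integrableOn hH.integrableOn hs
          fun ω hω ↦ ?_
        have h_ub : (fun y ↦ H (y, Z ω)) ∈ upperBounds (Set.range (α (Z ω₀))) := by
          rintro _ ⟨x, rfl⟩ y
          rw [← show α (Z ω) = α (Z ω₀) from hω]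
          exact hle x y (Z ω)
        exact hf_lub.2 h_ub (Y ω)

lemma exists_simpleFunc_eq_indicator {f : E → ℝ} (hf : f ∈ 𝒜) {A : Set E} {B : Set S}
    (hA : MeasurableSet A) (hB : MeasurableSet B) :
    ∃ α : SimpleFunc S (SimpleFunc E (E → ℝ)), (∀ z x, α z x ∈ 𝒜) ∧
      ∀ z x y, α z x y = (A ×ˢ B).indicator (fun _ ↦ f y) (x, z) := by
  refine ⟨.piecewise B hB (.const S (.piecewise A hA (.const E f) 0)) 0,
    fun z x ↦ ?_, fun z x y ↦ ?_⟩ <;>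
  by_cases hz : z ∈ B <;> by_cases hx : x ∈ A <;> simp [hz, hx, hf]

lemma integrable_fst_map (h : IsCondOrdered P X Y Z 𝒜) (hY : Measurable Y) (hZ : Measurable Z)
    {f : E → ℝ} (hf : f ∈ 𝒜) :
    Integrable (fun w : E × S ↦ f w.1) (P.map fun ω ↦ (Y ω, Z ω)) :=
  (integrable_map_measure ((h.measurable f hf).comp measurable_fst).aestronglyMeasurable
    (hY.prodMk hZ).aemeasurable).2 (h.integrable_right f hf)

lemma apply_indicator_one_eq (h : IsCondOrdered P X Y Z 𝒜)
    {l : (E × (E × S) → ℝ) →ₗ[ℝ] ℝ} (hl : ∀ f ∈ 𝒜, ∀ A B, MeasurableSet A → MeasurableSet B →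
      ∫ ω in X ⁻¹' A ∩ Z ⁻¹' B, f (X ω) ∂P ≤
        l ((A ×ˢ (Set.univ ×ˢ B)).indicator fun p ↦ f p.2.1))
    {A : Set E} {B : Set S} (hA : MeasurableSet A) (hB : MeasurableSet B) :
    l ((A ×ˢ (Set.univ ×ˢ B)).indicator 1) = P.real (X ⁻¹' A ∩ Z ⁻¹' B) := by
  have h_le := hl _ (h.const_mem 1) A B hA hB
  have h_ge := hl _ (h.const_mem (-1)) A B hA hB
  have h_neg : (A ×ˢ (Set.univ ×ˢ B)).indicator (fun _ ↦ -1) =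
      -(A ×ˢ (Set.univ ×ˢ B)).indicator (1 : E × (E × S) → ℝ) :=
    Set.indicator_neg _ _
  rw [h_neg, map_neg, setIntegral_const, smul_eq_mul, mul_neg_one, neg_le_neg_iff] at h_ge
  rw [setIntegral_const, smul_eq_mul, mul_one] at h_le
  exact h_ge.antisymm h_le

lemma comp_fst_ae_le_condExp (h : IsCondOrdered P X Y Z 𝒜) {π : Measure (E × (E × S))}
    [IsFiniteMeasure π] (hX : IdentDistrib (fun p ↦ (p.1, p.2.2)) (fun ω ↦ (X ω, Z ω)) π P)
    (hY : IdentDistrib Prod.snd (fun ω ↦ (Y ω, Z ω)) π P) {f : E → ℝ} (hf : f ∈ 𝒜)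
    (h_rect : ∀ A B, MeasurableSet A → MeasurableSet B →
      ∫ ω in X ⁻¹' A ∩ Z ⁻¹' B, f (X ω) ∂P ≤ ∫ p in A ×ˢ (Set.univ ×ˢ B), f p.2.1 ∂π) :
    (fun p ↦ f p.1) ≤ᵐ[π]
      π[fun p ↦ f p.2.1 | MeasurableSpace.comap (fun p ↦ (p.1, p.2.2)) inferInstance] := by
  have hf_fst : Measurable fun w : E × S ↦ f w.1 := (h.measurable f hf).comp measurable_fst
  refine ae_le_condExp_of_isSetSemiring isSetSemiring_measurableRectangles
    generateFrom_measurableRectangles.symm univ_mem_measurableRectangles (by fun_prop) hf_fst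
    ((hX.comp hf_fst).integrable_iff.2 (h.integrable_left f hf))
    ((hY.comp hf_fst).integrable_iff.2 (h.integrable_right f hf)) ?_
  rintro _ ⟨A, hA, B, hB, rfl⟩
  rw [setIntegral_comp_eq_of_identDistrib hX hf_fst (hA.prod hB),
    preimage_fst_snd_snd_prod]
  exact h_rect A B hA hB

variable [IsProbabilityMeasure P]

lemma exists_isCouplingFunctional (h : IsCondOrdered P X Y Z 𝒜) (hX : Measurable X)
    (hY : Measurable Y) (hZ : Measurable Z) :
    ∃ l, IsCouplingFunctional (E := E) (P.map fun ω ↦ (Y ω, Z ω)) l ∧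
      ∀ f ∈ 𝒜, ∀ A B, MeasurableSet A → MeasurableSet B →
        ∫ ω in X ⁻¹' A ∩ Z ⁻¹' B, f (X ω) ∂P ≤
          l ((A ×ˢ (Set.univ ×ˢ B)).indicator fun p ↦ f p.2.1) := by
  have : Nonempty E := P.nonempty_of_neZero.map X
  have hYZ : Measurable fun ω ↦ (Y ω, Z ω) := hY.prodMk hZ
  have : IsProbabilityMeasure (P.map fun ω ↦ (Y ω, Z ω)) :=
    Measure.isProbabilityMeasure_map hYZ.aemeasurable
  obtain ⟨l, hl, hl_le⟩ := _root_.exists_isCouplingFunctional (h.constraints hX hZ)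
    (Q := P.map fun ω ↦ (Y ω, Z ω)) <| by
      rintro _ ⟨α, hα, rfl⟩ H hH hle
      rw [integral_map hYZ.aemeasurable hH.aestronglyMeasurable]
      exact h.integral_selection_le hX hZ hα (hH.comp_measurable hYZ) fun x y z ↦ hle x (y, z)
  refine ⟨l, hl, fun f hf A B hA hB ↦ ?_⟩
  obtain ⟨α, hα, hα_eq⟩ := exists_simpleFunc_eq_indicator hf hA hB
  have h_fun : (fun p : E × (E × S) ↦ α p.2.2 p.1 p.2.1) =
      (A ×ˢ (Set.univ ×ˢ B)).indicator fun p ↦ f p.2.1 := by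
    classical
    ext p
    simp only [hα_eq, Set.indicator_apply, Set.mem_prod, Set.mem_univ, true_and]
  have h_int : ∫ ω, α (Z ω) (X ω) (X ω) ∂P = ∫ ω in X ⁻¹' A ∩ Z ⁻¹' B, f (X ω) ∂P := by
    rw [← integral_indicator ((hX hA).inter (hZ hB))]
    simp only [hα_eq]
    rfl
  rw [← h_int, ← h_fun]
  refine hl_le _ ⟨α, hα, rfl⟩ ?_
  rw [h_fun]
  exact indicator_mem_dominated (comp_snd_mem_dominated (h.integrable_fst_map hY hZ hf)) _

theorem exists_coupling [StandardBorelSpace E] (h : IsCondOrdered P X Y Z 𝒜)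
    (hX : Measurable X) (hY : Measurable Y) (hZ : Measurable Z) :
    ∃ π : Measure (E × (E × S)), IsProbabilityMeasure π ∧
      IdentDistrib (fun p ↦ (p.1, p.2.2)) (fun ω ↦ (X ω, Z ω)) π P ∧
      IdentDistrib Prod.snd (fun ω ↦ (Y ω, Z ω)) π P ∧
      ∀ f ∈ 𝒜, (fun p ↦ f p.1) ≤ᵐ[π]
        π[fun p ↦ f p.2.1 | MeasurableSpace.comap (fun p ↦ (p.1, p.2.2)) inferInstance] := by
  have hXZ : Measurable fun ω ↦ (X ω, Z ω) := hX.prodMk hZ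
  have hYZ : Measurable fun ω ↦ (Y ω, Z ω) := hY.prodMk hZ
  have hV : Measurable fun p : E × (E × S) ↦ (p.1, p.2.2) := by fun_prop
  obtain ⟨l, hl, hl_le⟩ := h.exists_isCouplingFunctional hX hY hZ
  have hl_one := fun A B ↦ h.apply_indicator_one_eq hl_le (A := A) (B := B)
  obtain ⟨π, hsnd, hπ⟩ := hl.exists_measure (μ := P.map X) fun A hA ↦ by
    rw [map_measureReal_apply hX hA, ← Set.inter_univ (X ⁻¹' A), ← Set.preimage_univ (f := Z),
      ← hl_one A _ hA .univ, Set.univ_prod_univ]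
  have h_law : P.map (fun ω ↦ (X ω, Z ω)) = π.map fun p ↦ (p.1, p.2.2) := by
    refine Measure.ext_prod fun {A B} hA hB ↦ ?_
    rw [Measure.map_apply hV (hA.prod hB), Measure.map_apply hXZ (hA.prod hB),
      preimage_fst_snd_snd_prod, hπ _ _ hA (.prod .univ hB), hl_one A B hA hB, ofReal_measureReal]
    rfl
  have hY' : IdentDistrib Prod.snd (fun ω ↦ (Y ω, Z ω)) π P :=
    ⟨measurable_snd.aemeasurable, hYZ.aemeasurable, hsnd⟩
  have hX' : IdentDistrib (fun p ↦ (p.1, p.2.2)) (fun ω ↦ (X ω, Z ω)) π P :=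
    ⟨hV.aemeasurable, hXZ.aemeasurable, h_law.symm⟩
  have : IsProbabilityMeasure π := ⟨(hY'.measure_mem_eq .univ).trans measure_univ⟩
  refine ⟨π, this, hX', hY', fun f hf ↦ h.comp_fst_ae_le_condExp hX' hY' hf fun A B hA hB ↦ ?_⟩
  refine (hl_le f hf A B hA hB).trans_eq (hl.setIntegral_eq_apply_indicator hsnd
    (.prod .univ hB) (hπ A · hA) (h.integrable_fst_map hY hZ hf)).symm

end IsCondOrdered

end MaxStableCone

section IncreasingConvex

lemma measurable_of_convexOn_univ {E : Type*} [NormedAddCommGroup E] [NormedSpace ℝ E]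
    [FiniteDimensional ℝ E] [MeasurableSpace E] [OpensMeasurableSpace E] {φ : E → ℝ}
    (hφ : ConvexOn ℝ Set.univ φ) : Measurable φ :=
  (continuousOn_univ.1 (hφ.continuousOn isOpen_univ)).measurable

variable {d : ℕ}

section Coordinates

variable {Ω : Type*} {m m0 : MeasurableSpace Ω} {P : Measure Ω} {X Y : Ω → Euc d}

/-- The test functions of the increasing convex order between `X` and `Y`. -/
def incConvexCone (P : Measure Ω) (X Y : Ω → Euc d) : PointedCone ℝ (Euc d → ℝ) where
  carrier := {φ | ConvexOn ℝ Set.univ φ ∧ CoordMono φ ∧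
    Integrable (fun ω ↦ φ (X ω)) P ∧ Integrable (fun ω ↦ φ (Y ω)) P}
  zero_mem' := ⟨convexOn_const 0 convex_univ, fun _ _ _ ↦ le_rfl, integrable_zero _ _ _,
    integrable_zero _ _ _⟩
  add_mem' := fun ⟨hφ, hφ_mono, hφX, hφY⟩ ⟨hψ, hψ_mono, hψX, hψY⟩ ↦
    ⟨hφ.add hψ, fun x y h ↦ add_le_add (hφ_mono x y h) (hψ_mono x y h), hφX.add hψX, hφY.add hψY⟩
  smul_mem' := fun c _ ⟨hφ, hφ_mono, hφX, hφY⟩ ↦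
    ⟨hφ.smul c.2, fun x y h ↦ mul_le_mul_of_nonneg_left (hφ_mono x y h) c.2,
      hφX.const_mul _, hφY.const_mul _⟩

lemma coord_mem_incConvexCone (hX : Integrable X P) (hY : Integrable Y P) (i : Fin d) :
    (fun x ↦ x i) ∈ incConvexCone P X Y :=
  ⟨(EuclideanSpace.proj (𝕜 := ℝ) i).toLinearMap.convexOn convex_univ, fun _ _ h ↦ h i,
    (EuclideanSpace.proj (𝕜 := ℝ) i).integrable_comp hX,
    (EuclideanSpace.proj (𝕜 := ℝ) i).integrable_comp hY⟩

lemma condExp_coord (hY : Integrable Y P) (i : Fin d) :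
    P[fun ω ↦ Y ω i | m] =ᵐ[P] fun ω ↦ P[Y | m] ω i :=
  ((EuclideanSpace.proj (𝕜 := ℝ) i).comp_condExp_comm hY).symm

end Coordinates

variable {Ω : Type} {S : Type*} [MeasurableSpace Ω] [MeasurableSpace S] {P : Measure Ω}
  {X Y : Ω → Euc d} {Z : Ω → S}

lemma isCondOrdered_incConvexCone [IsFiniteMeasure P] (hZ : Measurable Z)
    (h : CondICXLe P (MeasurableSpace.comap Z inferInstance) X Y) :
    IsCondOrdered P X Y Z (incConvexCone P X Y) where
  supClosed := fun _ ⟨hφ, hφ_mono, hφX, hφY⟩ _ ⟨hψ, hψ_mono, hψX, hψY⟩ ↦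
    ⟨hφ.sup hψ, fun x y hxy ↦ sup_le_sup (hφ_mono x y hxy) (hψ_mono x y hxy), hφX.sup hψX,
      hφY.sup hψY⟩
  const_mem c := ⟨convexOn_const c convex_univ, fun _ _ _ ↦ le_rfl, integrable_const c,
    integrable_const c⟩
  measurable _ hφ := measurable_of_convexOn_univ hφ.1
  integrable_left _ hφ := hφ.2.2.1
  integrable_right _ hφ := hφ.2.2.2
  setIntegral_le φ := fun ⟨hφ, hφ_mono, hφX, hφY⟩ B hB ↦
    (condExp_le_condExp_iff_setIntegral_le hZ.comap_le hφX hφY).1 (h φ hφ hφ_mono hφX hφY) _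
      ⟨B, hB, rfl⟩

theorem CondICXLe.exists_coupling [IsProbabilityMeasure P] (hX : Measurable X) (hY : Measurable Y)
    (hZ : Measurable Z) (hXi : Integrable X P) (hYi : Integrable Y P)
    (h : CondICXLe P (MeasurableSpace.comap Z inferInstance) X Y) :
    ∃ π : Measure (Euc d × (Euc d × S)), IsProbabilityMeasure π ∧
      IdentDistrib (fun p ↦ (p.1, p.2.2)) (fun ω ↦ (X ω, Z ω)) π P ∧
      IdentDistrib Prod.snd (fun ω ↦ (Y ω, Z ω)) π P ∧
      ∀ᵐ p ∂π, ∀ i, p.1 i ≤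
        π[fun p ↦ p.2.1 | MeasurableSpace.comap (fun p ↦ (p.1, p.2.2)) inferInstance] p i := by
  obtain ⟨π, hπ, hπX, hπY, h_le⟩ := (isCondOrdered_incConvexCone hZ h).exists_coupling hX hY hZ
  have h_int : Integrable (fun p ↦ p.2.1) π := (hπY.comp measurable_fst).integrable_iff.2 hYi
  refine ⟨π, hπ, hπX, hπY, ae_all_iff.2 fun i ↦ ?_⟩
  exact (h_le _ (coord_mem_incConvexCone hXi hYi i)).trans (condExp_coord h_int i).le

variable {Ω' : Type*} [MeasurableSpace Ω'] {P' : Measure Ω'} {X' Y' : Ω' → Euc d} {Z' : Ω' → S}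

theorem CondICXLe.of_coupling [IsFiniteMeasure P] [IsFiniteMeasure P'] (hZ : Measurable Z)
    (hX' : Measurable X') (hZ' : Measurable Z') (hYi : Integrable Y P)
    (hXZ : IdentDistrib (fun ω ↦ (X' ω, Z' ω)) (fun ω ↦ (X ω, Z ω)) P' P)
    (hYZ : IdentDistrib (fun ω ↦ (Y' ω, Z' ω)) (fun ω ↦ (Y ω, Z ω)) P' P)
    (h_le : ∀ᵐ ω ∂P', ∀ i, X' ω i ≤
      P'[Y' | MeasurableSpace.comap (fun ω ↦ (X' ω, Z' ω)) inferInstance] ω i) :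
    CondICXLe P (MeasurableSpace.comap Z inferInstance) X Y := by
  intro φ hφ hφ_mono hφX hφY
  have hφ_fst : Measurable fun w : Euc d × S ↦ φ w.1 :=
    (measurable_of_convexOn_univ hφ).comp measurable_fst
  have hXZ_le : MeasurableSpace.comap (fun ω ↦ (X' ω, Z' ω)) inferInstance ≤ ‹MeasurableSpace Ω'› :=
    (hX'.prodMk hZ').comap_le
  have hYi' : Integrable Y' P' := (hYZ.comp measurable_fst).integrable_iff.2 hYi
  have hφX' : Integrable (fun ω ↦ φ (X' ω)) P' := (hXZ.comp hφ_fst).integrable_iff.2 hφX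
  have hφY' : Integrable (fun ω ↦ φ (Y' ω)) P' := (hYZ.comp hφ_fst).integrable_iff.2 hφY
  have h_jensen : (fun ω ↦ φ (X' ω)) ≤ᵐ[P']
      P'[fun ω ↦ φ (Y' ω) | MeasurableSpace.comap (fun ω ↦ (X' ω, Z' ω)) inferInstance] := by
    filter_upwards [h_le, hφ.map_condExp_le_of_finiteDimensional hXZ_le hYi' hφY']
      with ω h_coord h_convex
    exact (hφ_mono _ _ h_coord).trans h_convex
  refine (condExp_le_condExp_iff_setIntegral_le hZ.comap_le hφX hφY).2 ?_
  rintro _ ⟨B, hB, rfl⟩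
  have hB' : MeasurableSet (Prod.snd ⁻¹' B : Set (Euc d × S)) := measurable_snd hB
  calc ∫ ω in Z ⁻¹' B, φ (X ω) ∂P
      = ∫ ω in Z' ⁻¹' B, φ (X' ω) ∂P' :=
        (setIntegral_comp_eq_of_identDistrib hXZ hφ_fst hB').symm
    _ ≤ ∫ ω in Z' ⁻¹' B, (P'[fun ω ↦ φ (Y' ω) |
          MeasurableSpace.comap (fun ω ↦ (X' ω, Z' ω)) inferInstance]) ω ∂P' :=
        setIntegral_mono_ae hφX'.integrableOn integrable_condExp.integrableOn h_jensen
    _ = ∫ ω in Z' ⁻¹' B, φ (Y' ω) ∂P' := setIntegral_condExp hXZ_le hφY' ⟨_, hB', rfl⟩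
    _ = ∫ ω in Z ⁻¹' B, φ (Y ω) ∂P := setIntegral_comp_eq_of_identDistrib hYZ hφ_fst hB'

end IncreasingConvex

/-- Conditional Strassen theorem (increasing convex order): X | Z ≤icx Y | Z iff
there is a Z-conditional coupling (X̂, Ŷ, Ẑ) with X̂ ≤ E(Ŷ | σ(X̂, Ẑ))
coordinatewise a.s. -/
theorem conditional_strassen_icx
    (d : ℕ) (hd : 1 ≤ d) {Ω : Type} [MeasurableSpace Ω] (P : Measure Ω)
    [IsProbabilityMeasure P] {S : Type} [MeasurableSpace S]
    (X Y : Ω → Euc d) (Z : Ω → S)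
    (hX : Measurable X) (hY : Measurable Y) (hZ : Measurable Z)
    (hXi : Integrable X P) (hYi : Integrable Y P) :
    CondICXLe P (MeasurableSpace.comap Z inferInstance) X Y ↔
      ∃ (Ω' : Type) (_ : MeasurableSpace Ω') (P' : Measure Ω'),
        IsProbabilityMeasure P' ∧
        ∃ (X' Y' : Ω' → Euc d) (Z' : Ω' → S),
          Measurable X' ∧ Measurable Y' ∧ Measurable Z' ∧
          P'.map (fun ω => (X' ω, Z' ω)) = P.map (fun ω => (X ω, Z ω)) ∧
          P'.map (fun ω => (Y' ω, Z' ω)) = P.map (fun ω => (Y ω, Z ω)) ∧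
          (∀ᵐ ω ∂P', ∀ i,
            X' ω i ≤
              (P'[Y' | MeasurableSpace.comap (fun ω => (X' ω, Z' ω)) inferInstance]) ω i) := by
  constructor
  · intro h
    obtain ⟨π, hπ, hπX, hπY, h_le⟩ := h.exists_coupling hX hY hZ hXi hYi
    exact ⟨Euc d × (Euc d × S), inferInstance, π, hπ, fun p ↦ p.1, fun p ↦ p.2.1, fun p ↦ p.2.2,
      by fun_prop, by fun_prop, by fun_prop, hπX.map_eq, hπY.map_eq, h_le⟩
  · rintro ⟨Ω', _, P', _, X', Y', Z', hX', hY', hZ', hXZ, hYZ, h_le⟩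
    exact .of_coupling hZ hX' hZ' hYi
      ⟨(hX'.prodMk hZ').aemeasurable, (hX.prodMk hZ).aemeasurable, hXZ⟩
      ⟨(hY'.prodMk hZ').aemeasurable, (hY.prodMk hZ).aemeasurable, hYZ⟩ h_le
end
end

section
/- Let (Ω, A, P) be a probability space, X, Y : Ω → ℝ^d integrable random vectors, Z : Ω → S a random element in a measurable space S with law μ, and let K and L be regular conditional distributions of X and of Y given Z, respectively. Then X | Z ≤cx Y | Z if and only if K_θ ≤cx L_θ for μ-almost every θ ∈ S, and X | Z ≤icx Y | Z if and only if K_θ ≤icx L_θ for μ-almost every θ ∈ S. -/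
open MeasureTheory ProbabilityTheory Filter

noncomputable section

/-- A regular conditional distribution of X given Z. -/
def IsRCD {d : ℕ} {Ω : Type} {mΩ : MeasurableSpace Ω} (P : Measure Ω)
    {S : Type} [MeasurableSpace S] (X : Ω → Euc d) (Z : Ω → S)
    (K : Kernel S (Euc d)) : Prop :=
  ∀ A : Set S, MeasurableSet A → ∀ B : Set (Euc d), MeasurableSet B →
    P (Z ⁻¹' A ∩ X ⁻¹' B) = ∫⁻ θ in A, K θ B ∂(P.map Z)

/-!
A continuous convex function is the pointwise limit of maxima of finitely many of its affine
minorants, and an affine minorant of a coordinatewise increasing function is itself coordinatewise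
increasing. The integral of such a maximum against a measure with finite first moment depends
continuously on the affine functions involved, which range over a separable space. Hence a countable
family of test functions decides the (increasing) convex order between all measures with finite
first moment, and the exceptional null sets of the conditional inequalities, one for each test
function, can be merged into one.
-/

open scoped Topology

section ContinuousAffineMap

variable {𝕜 V W : Type*} [NontriviallyNormedField 𝕜] [NormedAddCommGroup V] [NormedSpace 𝕜 V]
  [NormedAddCommGroup W] [NormedSpace 𝕜 W]

instance secondCountableTopology_continuousAffineMap
    [SecondCountableTopology W] [SecondCountableTopology (V →L[𝕜] W)] :
    SecondCountableTopology (V →ᴬ[𝕜] W) :=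
  (ContinuousAffineMap.decompLinearIsometryEquiv 𝕜 𝕜 V W).toHomeomorph.secondCountableTopology

lemma norm_continuousAffineMap_apply_le (a : V →ᴬ[𝕜] W) (x : V) : ‖a x‖ ≤ ‖a‖ * (‖x‖ + 1) :=
  calc ‖a x‖ = ‖a.contLinear x + a 0‖ := by rw [a.decomp]; simp
    _ ≤ ‖a.contLinear‖ * ‖x‖ + ‖a 0‖ := by grw [norm_add_le, a.contLinear.le_opNorm]
    _ ≤ ‖a‖ * ‖x‖ + ‖a‖ := by grw [a.norm_contLinear_le, a.norm_image_zero_le]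
    _ = ‖a‖ * (‖x‖ + 1) := by ring

lemma continuous_continuousAffineMap_eval (x : V) : Continuous fun a : V →ᴬ[𝕜] W ↦ a x := by
  let e := ContinuousAffineMap.decompLinearIsometryEquiv 𝕜 𝕜 V W
  have h : (fun a : V →ᴬ[𝕜] W ↦ a x) = fun a ↦ (e a).2 x + (e a).1 := by
    ext a
    simp [e, congrFun a.decomp x]
  rw [h]
  fun_prop

end ContinuousAffineMap

section MaxAffine

variable {E ι : Type*} [NormedAddCommGroup E] [NormedSpace ℝ E] [Fintype ι] [Nonempty ι]

/-- The maximum of a nonempty finite family of continuous affine functions. -/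
def maxAffine (a : ι → E →ᴬ[ℝ] ℝ) (x : E) : ℝ :=
  Finset.univ.sup' Finset.univ_nonempty fun i ↦ a i x

lemma exists_maxAffine_eq (a : ι → E →ᴬ[ℝ] ℝ) (x : E) : ∃ i, maxAffine a x = a i x := by
  obtain ⟨i, -, hi⟩ := Finset.exists_mem_eq_sup' Finset.univ_nonempty fun i ↦ a i x
  exact ⟨i, hi⟩

lemma le_maxAffine (a : ι → E →ᴬ[ℝ] ℝ) (i : ι) (x : E) : a i x ≤ maxAffine a x :=
  Finset.le_sup' (fun i ↦ a i x) (Finset.mem_univ i)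

lemma maxAffine_le {a : ι → E →ᴬ[ℝ] ℝ} {x : E} {c : ℝ} (h : ∀ i, a i x ≤ c) :
    maxAffine a x ≤ c :=
  Finset.sup'_le _ _ fun i _ ↦ h i

lemma abs_maxAffine_le (a : ι → E →ᴬ[ℝ] ℝ) (x : E) : |maxAffine a x| ≤ ‖a‖ * (‖x‖ + 1) := by
  obtain ⟨i, hi⟩ := exists_maxAffine_eq a x
  rw [hi]
  grw [← norm_le_pi_norm a i]
  exact norm_continuousAffineMap_apply_le (a i) x

lemma continuous_maxAffine (a : ι → E →ᴬ[ℝ] ℝ) : Continuous (maxAffine a) :=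
  Continuous.finset_sup'_apply _ fun i _ ↦ (a i).continuous

lemma continuous_maxAffine_eval (x : E) : Continuous fun a : ι → E →ᴬ[ℝ] ℝ ↦ maxAffine a x :=
  Continuous.finset_sup'_apply _ fun i _ ↦
    (continuous_continuousAffineMap_eval x).comp (continuous_apply i)

lemma exists_seq_affine_le_tendsto_maxAffine [SecondCountableTopology E] {φ : E → ℝ}
    (hφ : ConvexOn ℝ Set.univ φ) (hφc : LowerSemicontinuous φ) :
    ∃ a : ℕ → E →ᴬ[ℝ] ℝ, (∀ i, ⇑(a i) ≤ φ) ∧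
      ∀ x, Tendsto (fun n ↦ maxAffine (fun k : Fin (n + 1) ↦ a k) x) atTop (𝓝 (φ x)) := by
  obtain ⟨l, c, hle, hsup⟩ := hφ.real_univ_sSup_of_nat_affine_eq hφc
  let a (i : ℕ) : E →ᴬ[ℝ] ℝ := (l i).toContinuousAffineMap + ContinuousAffineMap.const ℝ E (c i)
  have hsup_apply (x : E) : ⨆ i, a i x = φ x := by
    rw [← hsup, iSup_apply]
    rfl
  refine ⟨a, hle, fun x ↦ tendsto_order.2 ⟨fun b hb ↦ ?_, fun b hb ↦ .of_forall fun n ↦ ?_⟩⟩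
  · rw [← hsup_apply x] at hb
    obtain ⟨i, hi⟩ := exists_lt_of_lt_ciSup hb
    filter_upwards [eventually_ge_atTop i] with n hn
    exact hi.trans_le (le_maxAffine (fun k : Fin (n + 1) ↦ a k) ⟨i, Nat.lt_succ_of_le hn⟩ x)
  · exact lt_of_le_of_lt (maxAffine_le (a := fun k : Fin (n + 1) ↦ a k) fun k ↦ hle k x) hb

end MaxAffine

section Integrals

variable {E : Type*} [NormedAddCommGroup E]

lemma integrable_comp_of_abs_le_mul_norm_add_one {Ω : Type*} {_ : MeasurableSpace Ω}
    {P : Measure Ω} [IsFiniteMeasure P] {X : Ω → E} (hX : Integrable X P) {φ : E → ℝ}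
    (hφ : Continuous φ) {C : ℝ} (hC : ∀ x, |φ x| ≤ C * (‖x‖ + 1)) :
    Integrable (fun ω ↦ φ (X ω)) P :=
  ((hX.norm.add (integrable_const 1)).const_mul C).mono'
    (hφ.comp_aestronglyMeasurable hX.aestronglyMeasurable) (ae_of_all _ fun ω ↦ hC (X ω))

variable [NormedSpace ℝ E] [MeasurableSpace E] [BorelSpace E] {μ : Measure E} [IsFiniteMeasure μ]

lemma continuous_integral_maxAffine {ι : Type*} [Fintype ι] [Nonempty ι]
    (hμ : Integrable (fun x ↦ x) μ) :
    Continuous fun a : ι → E →ᴬ[ℝ] ℝ ↦ ∫ x, maxAffine a x ∂μ := by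
  refine continuous_iff_continuousAt.2 fun a₀ ↦ continuousAt_of_dominated
    (bound := fun x ↦ (‖a₀‖ + 1) * (‖x‖ + 1))
    (.of_forall fun a ↦ (continuous_maxAffine a).aestronglyMeasurable) ?_
    ((hμ.norm.add (integrable_const 1)).const_mul _)
    (ae_of_all _ fun x ↦ (continuous_maxAffine_eval x).continuousAt)
  filter_upwards [continuous_norm.continuousAt.eventually_lt continuousAt_const
    (lt_add_one ‖a₀‖)] with a ha
  refine ae_of_all _ fun x ↦ ?_
  grw [Real.norm_eq_abs, abs_maxAffine_le, ha]

lemma tendsto_integral_maxAffine (hμ : Integrable (fun x ↦ x) μ) {φ : E → ℝ}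
    (hφ : Integrable φ μ) {a : ℕ → E →ᴬ[ℝ] ℝ} (ha : ∀ i, ⇑(a i) ≤ φ)
    (hlim : ∀ x, Tendsto (fun n ↦ maxAffine (fun k : Fin (n + 1) ↦ a k) x) atTop (𝓝 (φ x))) :
    Tendsto (fun n ↦ ∫ x, maxAffine (fun k : Fin (n + 1) ↦ a k) x ∂μ) atTop
      (𝓝 (∫ x, φ x ∂μ)) := by
  have ha₀ : Integrable (a 0) μ := integrable_comp_of_abs_le_mul_norm_add_one hμ
    (a 0).continuous (norm_continuousAffineMap_apply_le (a 0))
  refine tendsto_integral_of_dominated_convergence (fun x ↦ |a 0 x| + |φ x|)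
    (fun n ↦ (continuous_maxAffine _).aestronglyMeasurable) (ha₀.abs.add hφ.abs)
    (fun n ↦ ae_of_all _ fun x ↦ ?_) (ae_of_all _ hlim)
  have hlower : a 0 x ≤ maxAffine (fun k : Fin (n + 1) ↦ a k) x :=
    le_maxAffine (fun k : Fin (n + 1) ↦ a k) 0 x
  have hupper : maxAffine (fun k : Fin (n + 1) ↦ a k) x ≤ φ x :=
    maxAffine_le fun k ↦ ha k x
  calc |maxAffine (fun k : Fin (n + 1) ↦ a k) x| ≤ max |a 0 x| |φ x| :=
        abs_le_max_abs_abs hlower hupper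
    _ ≤ |a 0 x| + |φ x| := max_le_add_of_nonneg (abs_nonneg _) (abs_nonneg _)

end Integrals

section IntegralOrder

variable {E : Type*}

/-- The integral stochastic order generated by the test functions `𝓕`. The convex order is
`IntegralOrder {φ | ConvexOn ℝ Set.univ φ}`. -/
def IntegralOrder [MeasurableSpace E] (𝓕 : Set (E → ℝ)) (μ ν : Measure E) : Prop :=
  ∀ φ ∈ 𝓕, Integrable φ μ → Integrable φ ν → ∫ x, φ x ∂μ ≤ ∫ x, φ x ∂ν

/-- The conditional version, given the sub-σ-algebra `m`, of the integral stochastic order between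
the conditional laws of `X` and `Y`, expressed through conditional expectations. -/
def CondIntegralOrder {Ω : Type*} {_ : MeasurableSpace Ω} (𝓕 : Set (E → ℝ)) (P : Measure Ω)
    (m : MeasurableSpace Ω) (X Y : Ω → E) : Prop :=
  ∀ φ ∈ 𝓕, Integrable (fun ω ↦ φ (X ω)) P → Integrable (fun ω ↦ φ (Y ω)) P →
    P[fun ω ↦ φ (X ω) | m] ≤ᵐ[P] P[fun ω ↦ φ (Y ω) | m]

variable [NormedAddCommGroup E] [NormedSpace ℝ E]

/-- A class of convex functions stable under binary maxima and under passing to continuous affine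
minorants, so that each of its members can be approximated from below within the class by maxima of
affine functions. -/
structure IsConvexTestClass (𝓕 : Set (E → ℝ)) : Prop where
  convexOn : ∀ φ ∈ 𝓕, ConvexOn ℝ Set.univ φ
  sup_mem : ∀ φ ∈ 𝓕, ∀ ψ ∈ 𝓕, φ ⊔ ψ ∈ 𝓕
  affine_mem : ∀ φ ∈ 𝓕, ∀ a : E →ᴬ[ℝ] ℝ, ⇑a ≤ φ → ⇑a ∈ 𝓕

namespace IsConvexTestClass

variable {𝓕 : Set (E → ℝ)}

lemma maxAffine_mem (h𝓕 : IsConvexTestClass 𝓕) {ι : Type*} [Fintype ι] [Nonempty ι]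
    {a : ι → E →ᴬ[ℝ] ℝ} (ha : ∀ i, ⇑(a i) ∈ 𝓕) : maxAffine a ∈ 𝓕 := by
  have h : maxAffine a = Finset.univ.sup' Finset.univ_nonempty fun i ↦ ⇑(a i) := by
    ext x
    rw [Finset.sup'_apply, maxAffine]
  rw [h]
  exact Finset.sup'_induction _ _ h𝓕.sup_mem fun i _ ↦ ha i

variable [FiniteDimensional ℝ E]

lemma continuous (h𝓕 : IsConvexTestClass 𝓕) {φ : E → ℝ} (hφ : φ ∈ 𝓕) : Continuous φ :=
  continuousOn_univ.1 ((h𝓕.convexOn φ hφ).continuousOn isOpen_univ)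

variable [MeasurableSpace E] [BorelSpace E]

lemma integralOrder_of_maxAffine (h𝓕 : IsConvexTestClass 𝓕) {μ ν : Measure E}
    [IsFiniteMeasure μ] [IsFiniteMeasure ν]
    (hμ : Integrable (fun x ↦ x) μ) (hν : Integrable (fun x ↦ x) ν)
    (h : ∀ n (a : Fin (n + 1) → E →ᴬ[ℝ] ℝ), (∀ k, ⇑(a k) ∈ 𝓕) →
      ∫ x, maxAffine a x ∂μ ≤ ∫ x, maxAffine a x ∂ν) :
    IntegralOrder 𝓕 μ ν := by
  intro φ hφ hφμ hφν
  obtain ⟨a, ha, hlim⟩ := exists_seq_affine_le_tendsto_maxAffine (h𝓕.convexOn φ hφ)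
    (h𝓕.continuous hφ).lowerSemicontinuous
  exact le_of_tendsto_of_tendsto' (tendsto_integral_maxAffine hμ hφμ ha hlim)
    (tendsto_integral_maxAffine hν hφν ha hlim)
    fun n ↦ h n _ fun k ↦ h𝓕.affine_mem φ hφ (a k) (ha k)

theorem exists_countable_determining (h𝓕 : IsConvexTestClass 𝓕) :
    ∃ 𝓓 ⊆ 𝓕, 𝓓.Countable ∧ (∀ φ ∈ 𝓓, ∃ C, ∀ x, |φ x| ≤ C * (‖x‖ + 1)) ∧
      ∀ (μ ν : Measure E) [IsFiniteMeasure μ] [IsFiniteMeasure ν],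
        Integrable (fun x ↦ x) μ → Integrable (fun x ↦ x) ν →
        (∀ φ ∈ 𝓓, ∫ x, φ x ∂μ ≤ ∫ x, φ x ∂ν) → IntegralOrder 𝓕 μ ν := by
  let A (n : ℕ) := {a : Fin (n + 1) → E →ᴬ[ℝ] ℝ // ∀ k, ⇑(a k) ∈ 𝓕}
  choose D hD_countable hD_dense using fun n ↦ TopologicalSpace.exists_countable_dense (A n)
  refine ⟨⋃ n, (fun a : A n ↦ maxAffine a.1) '' D n, ?_,
    Set.countable_iUnion fun n ↦ (hD_countable n).image _, ?_, ?_⟩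
  · rintro φ hφ
    obtain ⟨n, a, -, rfl⟩ := Set.mem_iUnion.1 hφ
    exact h𝓕.maxAffine_mem a.2
  · rintro φ hφ
    obtain ⟨n, a, -, rfl⟩ := Set.mem_iUnion.1 hφ
    exact ⟨‖a.1‖, abs_maxAffine_le a.1⟩
  · intro μ ν _ _ hμ hν hle
    refine h𝓕.integralOrder_of_maxAffine hμ hν fun n a ha ↦ ?_
    have hclosed : IsClosed {b : A n | ∫ x, maxAffine b.1 x ∂μ ≤ ∫ x, maxAffine b.1 x ∂ν} :=
      isClosed_le ((continuous_integral_maxAffine hμ).comp continuous_subtype_val)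
        ((continuous_integral_maxAffine hν).comp continuous_subtype_val)
    have hD : D n ⊆ {b : A n | ∫ x, maxAffine b.1 x ∂μ ≤ ∫ x, maxAffine b.1 x ∂ν} :=
      fun b hb ↦ hle _ (Set.mem_iUnion.2 ⟨n, b, hb, rfl⟩)
    exact hclosed.closure_subset_iff.2 hD (hD_dense n ⟨a, ha⟩)

end IsConvexTestClass

end IntegralOrder

section Disintegration

variable {Ω S E : Type*} {mΩ : MeasurableSpace Ω} [mS : MeasurableSpace S] [MeasurableSpace E]
  {P : Measure Ω} [IsFiniteMeasure P] {X Y : Ω → E} {Z : Ω → S} {K L : Kernel S E}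
  [IsFiniteKernel K] [IsFiniteKernel L]

lemma ae_integrable_of_map_prodMk_eq_compProd {F : Type*} [NormedAddCommGroup F]
    (hX : AEMeasurable X P) (hZ : AEMeasurable Z P)
    (hK : P.map (fun ω ↦ (Z ω, X ω)) = P.map Z ⊗ₘ K) {f : E → F} (hf : StronglyMeasurable f)
    (hfX : Integrable (fun ω ↦ f (X ω)) P) :
    ∀ᵐ θ ∂P.map Z, Integrable f (K θ) := by
  have hmap : P.map X = K ∘ₘ P.map Z := by
    rw [← Measure.snd_compProd, ← hK, Measure.snd_map_prodMk₀ hZ]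
  refine Measure.ae_integrable_of_integrable_comp ?_
  rw [← hmap, integrable_map_measure hf.aestronglyMeasurable hX]
  exact hfX

variable [StandardBorelSpace E] [Nonempty E]

lemma condExp_ae_eq_integral_of_map_prodMk_eq_compProd {F : Type*} [NormedAddCommGroup F]
    [NormedSpace ℝ F] [CompleteSpace F] (hX : AEMeasurable X P) (hZ : Measurable Z)
    (hK : P.map (fun ω ↦ (Z ω, X ω)) = P.map Z ⊗ₘ K) {f : E → F} (hf : StronglyMeasurable f)
    (hfX : Integrable (fun ω ↦ f (X ω)) P) :
    P[fun ω ↦ f (X ω) | mS.comap Z] =ᵐ[P] fun ω ↦ ∫ x, f x ∂K (Z ω) := by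
  filter_upwards [condExp_ae_eq_integral_condDistrib hZ hX hf hfX, ae_of_ae_map hZ.aemeasurable
    (condDistrib_ae_eq_of_measure_eq_compProd Z hX hK)] with ω hcond hkernel
  rw [hcond, hkernel]

lemma condExp_ae_le_condExp_iff (hX : AEMeasurable X P) (hY : AEMeasurable Y P)
    (hZ : Measurable Z) (hK : P.map (fun ω ↦ (Z ω, X ω)) = P.map Z ⊗ₘ K)
    (hL : P.map (fun ω ↦ (Z ω, Y ω)) = P.map Z ⊗ₘ L) {f : E → ℝ} (hf : StronglyMeasurable f)
    (hfX : Integrable (fun ω ↦ f (X ω)) P) (hfY : Integrable (fun ω ↦ f (Y ω)) P) :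
    P[fun ω ↦ f (X ω) | mS.comap Z] ≤ᵐ[P] P[fun ω ↦ f (Y ω) | mS.comap Z] ↔
      ∀ᵐ θ ∂P.map Z, ∫ x, f x ∂K θ ≤ ∫ x, f x ∂L θ := by
  rw [ae_map_iff hZ.aemeasurable (measurableSet_le hf.integral_kernel.measurable
    hf.integral_kernel.measurable)]
  exact eventually_congr <| by
    filter_upwards [condExp_ae_eq_integral_of_map_prodMk_eq_compProd hX hZ hK hf hfX,
      condExp_ae_eq_integral_of_map_prodMk_eq_compProd hY hZ hL hf hfY] with ω hωX hωY
    rw [hωX, hωY]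

end Disintegration

theorem conditional_order_via_rcd_general {Ω S E : Type*} {mΩ : MeasurableSpace Ω}
    [mS : MeasurableSpace S] [NormedAddCommGroup E] [NormedSpace ℝ E] [FiniteDimensional ℝ E]
    [MeasurableSpace E] [BorelSpace E] {𝓕 : Set (E → ℝ)} (h𝓕 : IsConvexTestClass 𝓕)
    {P : Measure Ω} [IsFiniteMeasure P] {X Y : Ω → E} {Z : Ω → S} (hZ : Measurable Z)
    (hX : Integrable X P) (hY : Integrable Y P) {K L : Kernel S E}
    [IsFiniteKernel K] [IsFiniteKernel L] (hK : P.map (fun ω ↦ (Z ω, X ω)) = P.map Z ⊗ₘ K)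
    (hL : P.map (fun ω ↦ (Z ω, Y ω)) = P.map Z ⊗ₘ L) :
    CondIntegralOrder 𝓕 P (mS.comap Z) X Y ↔ ∀ᵐ θ ∂P.map Z, IntegralOrder 𝓕 (K θ) (L θ) := by
  have hXm := hX.aemeasurable
  have hYm := hY.aemeasurable
  constructor
  · intro h
    obtain ⟨𝓓, h𝓓𝓕, h𝓓_countable, h𝓓_growth, h𝓓⟩ := h𝓕.exists_countable_determining
    have h_ae : ∀ᵐ θ ∂P.map Z, ∀ φ ∈ 𝓓, ∫ x, φ x ∂K θ ≤ ∫ x, φ x ∂L θ := by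
      refine (ae_ball_iff h𝓓_countable).2 fun φ hφ ↦ ?_
      have hφc := h𝓕.continuous (h𝓓𝓕 hφ)
      obtain ⟨C, hC⟩ := h𝓓_growth φ hφ
      have hφX := integrable_comp_of_abs_le_mul_norm_add_one hX hφc hC
      have hφY := integrable_comp_of_abs_le_mul_norm_add_one hY hφc hC
      exact (condExp_ae_le_condExp_iff hXm hYm hZ hK hL hφc.stronglyMeasurable hφX hφY).1
        (h φ (h𝓓𝓕 hφ) hφX hφY)
    filter_upwards [h_ae,
      ae_integrable_of_map_prodMk_eq_compProd hXm hZ.aemeasurable hK stronglyMeasurable_id hX,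
      ae_integrable_of_map_prodMk_eq_compProd hYm hZ.aemeasurable hL stronglyMeasurable_id hY]
      with θ hθ hKθ hLθ
    exact h𝓓 (K θ) (L θ) hKθ hLθ hθ
  · intro h φ hφ hφX hφY
    have hφm := (h𝓕.continuous hφ).stronglyMeasurable
    refine (condExp_ae_le_condExp_iff hXm hYm hZ hK hL hφm hφX hφY).2 ?_
    filter_upwards [h, ae_integrable_of_map_prodMk_eq_compProd hXm hZ.aemeasurable hK hφm hφX,
      ae_integrable_of_map_prodMk_eq_compProd hYm hZ.aemeasurable hL hφm hφY] with θ hθ hφK hφL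
    exact hθ φ hφ hφK hφL

lemma IsRCD.map_prodMk_eq_compProd {d : ℕ} {Ω : Type} {mΩ : MeasurableSpace Ω} {P : Measure Ω}
    [IsFiniteMeasure P] {S : Type} [MeasurableSpace S] {X : Ω → Euc d} {Z : Ω → S}
    {K : Kernel S (Euc d)} [IsSFiniteKernel K] (hK : IsRCD P X Z K) (hX : Measurable X)
    (hZ : Measurable Z) : P.map (fun ω ↦ (Z ω, X ω)) = P.map Z ⊗ₘ K := by
  refine Measure.ext_prod fun {A B} hA hB ↦ ?_
  rw [Measure.map_apply (hZ.prodMk hX) (hA.prod hB), Measure.compProd_apply_prod hA hB,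
    ← hK A hA B hB]
  rfl

lemma CoordMono.sup {d : ℕ} {φ ψ : Euc d → ℝ} (hφ : CoordMono φ) (hψ : CoordMono ψ) :
    CoordMono (φ ⊔ ψ) :=
  fun x y hxy ↦ sup_le_sup (hφ x y hxy) (hψ x y hxy)

lemma CoordMono.affine_of_le {d : ℕ} {φ : Euc d → ℝ} (hφ : CoordMono φ) {a : Euc d →ᴬ[ℝ] ℝ}
    (ha : ⇑a ≤ φ) : CoordMono a := by
  intro x y hxy
  by_contra! hlt
  -- Along the ray from `y` through `x`, `φ` stays below `φ y` while `a` would grow linearly.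
  obtain ⟨n, hn⟩ := exists_nat_gt ((φ y - a y) / (a x - a y))
  rw [div_lt_iff₀ (sub_pos.2 hlt)] at hn
  let z := AffineMap.lineMap y x (n : ℝ)
  have haz : a z = n * (a x - a y) + a y := by
    simpa [z, AffineMap.lineMap_apply_module'] using
      (a : Euc d →ᵃ[ℝ] ℝ).apply_lineMap y x (n : ℝ)
  have hzy : ∀ i, z i ≤ y i := fun i ↦ by
    have := mul_nonpos_of_nonneg_of_nonpos (Nat.cast_nonneg (α := ℝ) n) (sub_nonpos.2 (hxy i))
    simpa [z, AffineMap.lineMap_apply_module'] using this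
  linarith [ha z, hφ z y hzy]

lemma incConvexOrder_iff_integralOrder {d : ℕ} {μ ν : Measure (Euc d)} :
    IncConvexOrder μ ν ↔
      IntegralOrder {φ : Euc d → ℝ | ConvexOn ℝ Set.univ φ ∧ CoordMono φ} μ ν :=
  ⟨fun h φ hφ ↦ h φ hφ.1 hφ.2, fun h φ hφ hφ_mono ↦ h φ ⟨hφ, hφ_mono⟩⟩

lemma condICXLe_iff_condIntegralOrder {d : ℕ} {Ω : Type} {_ : MeasurableSpace Ω} {P : Measure Ω}
    {m : MeasurableSpace Ω} {X Y : Ω → Euc d} :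
    CondICXLe P m X Y ↔
      CondIntegralOrder {φ : Euc d → ℝ | ConvexOn ℝ Set.univ φ ∧ CoordMono φ} P m X Y :=
  ⟨fun h φ hφ ↦ h φ hφ.1 hφ.2, fun h φ hφ hφ_mono ↦ h φ ⟨hφ, hφ_mono⟩⟩

lemma isConvexTestClass_convexOn {E : Type*} [NormedAddCommGroup E] [NormedSpace ℝ E] :
    IsConvexTestClass {φ : E → ℝ | ConvexOn ℝ Set.univ φ} where
  convexOn _ hφ := hφ
  sup_mem _ hφ _ hψ := hφ.sup hψ
  affine_mem _ _ a _ := (convexOn_id convex_univ).comp_affineMap (a : E →ᵃ[ℝ] ℝ)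

lemma isConvexTestClass_convexOn_coordMono {d : ℕ} :
    IsConvexTestClass {φ : Euc d → ℝ | ConvexOn ℝ Set.univ φ ∧ CoordMono φ} where
  convexOn _ hφ := hφ.1
  sup_mem _ hφ _ hψ := ⟨hφ.1.sup hψ.1, hφ.2.sup hψ.2⟩
  affine_mem φ hφ a ha := ⟨isConvexTestClass_convexOn.affine_mem φ hφ.1 a ha, hφ.2.affine_of_le ha⟩

/-- Conditional convex orders are characterised by the corresponding orders of
regular conditional distributions. -/
theorem conditional_order_via_rcd
    (d : ℕ) (hd : 1 ≤ d) {Ω : Type} {mΩ : MeasurableSpace Ω} (P : Measure Ω)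
    [IsProbabilityMeasure P] {S : Type} [MeasurableSpace S]
    (X Y : Ω → Euc d) (Z : Ω → S)
    (hX : Measurable X) (hY : Measurable Y) (hZ : Measurable Z)
    (hXi : Integrable X P) (hYi : Integrable Y P)
    (K L : Kernel S (Euc d)) [IsMarkovKernel K] [IsMarkovKernel L]
    (hK : IsRCD P X Z K) (hL : IsRCD P Y Z L) :
    (CondCXLe P (MeasurableSpace.comap Z inferInstance) X Y ↔
      ∀ᵐ θ ∂(P.map Z), ConvexOrder (K θ) (L θ)) ∧
    (CondICXLe P (MeasurableSpace.comap Z inferInstance) X Y ↔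
      ∀ᵐ θ ∂(P.map Z), IncConvexOrder (K θ) (L θ)) := by
  have hK' := hK.map_prodMk_eq_compProd hX hZ
  have hL' := hL.map_prodMk_eq_compProd hY hZ
  refine ⟨conditional_order_via_rcd_general isConvexTestClass_convexOn hZ hXi hYi hK' hL', ?_⟩
  simp only [condICXLe_iff_condIntegralOrder, incConvexOrder_iff_integralOrder]
  exact conditional_order_via_rcd_general isConvexTestClass_convexOn_coordMono hZ hXi hYi hK' hL'
end
end
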